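/- The number of standard Young tableaux of truncated shape n^m \ δ_k (an m×n rectangle with the staircase δ_k = (k, k-1, ..., 1) removed from its upper right corner), for n <= m, equals binom(mn - binom(k+1,2), m(n-k-1)) * f_{(n-k-1)^m} * g_{(m, m-1, ..., m-k)} * E_1(k+1, m, n-k-1) / E_1(k+1, m, 0), where for r even E_1(r,p,s) = prod_{r < l < 2p - r + 2} (l + 2s)^{-r/2} * prod_{2 <= l <= r} ((l+2s)(2p - l + 2 + 2s))^{-floor(l/2)}, and for r odd E_1(r,p,s) = (((r-1)/2 + s)! / (p - (r-1)/2 + s)!) * E_1(r-1, p, s). -/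

import Mathlib

open Finset
open scoped Classical

noncomputable section

/-- Cells of the skew Young diagram `lam / mu` (0-indexed: cell `(i,j)` with `mu i ≤ j < lam i`). -/
def skewCells (lam mu : ℕ →₀ ℕ) : Finset (ℕ × ℕ) :=
  lam.support.biUnion fun i =>
    ((Finset.range (lam i)).filter fun j => mu i ≤ j).image fun j => (i, j)

/-- A finitely supported function is a partition if it is antitone. -/
def IsPartition (l : ℕ →₀ ℕ) : Prop := ∀ i j : ℕ, i ≤ j → l j ≤ l i

/-- The type of all integer partitions. -/
def Ptn : Type := {l : ℕ →₀ ℕ // IsPartition l}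

/-- Semistandard condition: rows weakly increase, columns strictly increase. -/
def IsSSYT (lam mu : ℕ →₀ ℕ) (n : ℕ) (T : skewCells lam mu → Fin n) : Prop :=
  ∀ c c' : skewCells lam mu,
    ((c : ℕ × ℕ).1 = (c' : ℕ × ℕ).1 → (c : ℕ × ℕ).2 ≤ (c' : ℕ × ℕ).2 → T c ≤ T c') ∧
    ((c : ℕ × ℕ).2 = (c' : ℕ × ℕ).2 → (c : ℕ × ℕ).1 < (c' : ℕ × ℕ).1 → T c < T c')

/-- The (skew) Schur polynomial `s_{lam/mu}` in `n` variables, evaluated at `u`. -/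
def skewSchur {R : Type*} [CommSemiring R] (n : ℕ) (lam mu : ℕ →₀ ℕ) (u : Fin n → R) : R :=
  ∑ T ∈ Finset.univ.filter (IsSSYT lam mu n), ∏ c : skewCells lam mu, u (T c)

/-- The number of standard Young tableaux of an arbitrary (truncated) diagram `D`:
bijective fillings increasing along rows and down columns. -/
def sytCard (D : Finset (ℕ × ℕ)) : ℕ :=
  (Finset.univ.filter fun T : D → Fin D.card => Function.Bijective T ∧
    ∀ c c' : D, ((c : ℕ × ℕ).1 = (c' : ℕ × ℕ).1 → (c : ℕ × ℕ).2 < (c' : ℕ × ℕ).2 → T c < T c') ∧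
      ((c : ℕ × ℕ).2 = (c' : ℕ × ℕ).2 → (c : ℕ × ℕ).1 < (c' : ℕ × ℕ).1 → T c < T c')).card

/-- Complete homogeneous symmetric polynomial of degree `s` in `p` variables, evaluated at `u`. -/
def hpoly {R : Type*} [CommSemiring R] (p s : ℕ) (u : Fin p → R) : R :=
  ∑ f ∈ Finset.univ.filter (fun f : Fin s → Fin p => Monotone f), ∏ t, u (f t)

/-- The rectangular partition `(p^k)`. -/
def rectPtn (k p : ℕ) : ℕ →₀ ℕ :=
  Finsupp.onFinset (Finset.range k) (fun i => if i < k then p else 0)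
    (fun a ha => by
      simp only [Finset.mem_range]
      by_contra h
      simp [h] at ha)

/-- Plane partition of shape `D`: supported on `D`, weakly decreasing along rows and columns. -/
def IsPPofShape (D : Finset (ℕ × ℕ)) (T : ℕ × ℕ → ℕ) : Prop :=
  (∀ c, c ∉ D → T c = 0) ∧ ∀ c ∈ D, ∀ c' ∈ D,
    (c.1 = c'.1 → c.2 ≤ c'.2 → T c' ≤ T c) ∧ (c.2 = c'.2 → c.1 ≤ c'.1 → T c' ≤ T c)

/-- The factor `E_1(r,p,s)` for `r` even. -/
def E1even (r p s : ℕ) : ℚ :=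
  (∏ l ∈ Finset.Ioo r (2 * p - r + 2), ((l + 2 * s : ℕ) : ℚ) ^ (r / 2))⁻¹ *
    (∏ l ∈ Finset.Icc 2 r, (((l + 2 * s) * (2 * p - l + 2 + 2 * s) : ℕ) : ℚ) ^ (l / 2))⁻¹

/-- The factor `E_1(r,p,s)`. -/
def E1 (r p s : ℕ) : ℚ :=
  if r % 2 = 0 then E1even r p s
  else (Nat.factorial ((r - 1) / 2 + s) : ℚ) / (Nat.factorial (p - (r - 1) / 2 + s) : ℚ) *
    E1even (r - 1) p s

open MeasureTheory in
lemma null_noninj {ι : Type*} [Fintype ι] :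
    (volume : Measure (ι → ℝ)) {x | ¬ Function.Injective x} = 0 := by
  have hsub : {x : ι → ℝ | ¬ Function.Injective x} ⊆
      ⋃ p : {p : ι × ι // p.1 ≠ p.2}, {x : ι → ℝ | x p.1.1 = x p.1.2} := by
    intro x hx
    simp only [Set.mem_ofPred_eq, Function.Injective, not_forall] at hx
    obtain ⟨a, b, h, hab⟩ := hx
    exact Set.mem_iUnion.2 ⟨⟨(a, b), hab⟩, h⟩
  refine measure_mono_null hsub (measure_iUnion_null ?_)
  rintro ⟨⟨a, b⟩, hab⟩
  let L : (ι → ℝ) →ₗ[ℝ] ℝ := LinearMap.proj (R := ℝ) (φ := fun _ : ι => ℝ) a - LinearMap.proj (R := ℝ) (φ := fun _ : ι => ℝ) b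
  have hL : LinearMap.ker L ≠ ⊤ := by
    intro h
    have : (Pi.single a 1 : ι → ℝ) ∈ LinearMap.ker L := by rw [h]; trivial
    have h2 : (Pi.single a (1:ℝ) : ι → ℝ) a - (Pi.single a (1:ℝ) : ι → ℝ) b = 0 := this
    simp at hab
    rw [Pi.single_eq_same, Pi.single_eq_of_ne (Ne.symm hab)] at h2
    norm_num at h2
  have := Measure.addHaar_submodule (volume : Measure (ι → ℝ)) _ hL
  convert this using 2
  ext x
  simp [L, sub_eq_zero]

def cube (ι : Type*) : Set (ι → ℝ) := {x | ∀ c, x c ∈ Set.Icc (0:ℝ) 1}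

def ordPoly {ι : Type*} (r : ι → ι → Prop) : Set (ι → ℝ) :=
  {x | (∀ c, x c ∈ Set.Icc (0:ℝ) 1) ∧ ∀ c c', r c c' → x c ≤ x c'}

def chainReg {ι : Type*} {N : ℕ} (T : ι ≃ Fin N) : Set (ι → ℝ) :=
  {x | (∀ c, x c ∈ Set.Icc (0:ℝ) 1) ∧ StrictMono (x ∘ T.symm)}

open MeasureTheory

lemma meas_ordPoly {ι : Type*} [Fintype ι] (r : ι → ι → Prop) : MeasurableSet (ordPoly r) := by
  unfold ordPoly
  apply IsClosed.measurableSet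
  simp only [Set.ofPred_and, Set.ofPred_forall]
  refine IsClosed.inter (isClosed_iInter fun c => ?_) (isClosed_iInter fun c => isClosed_iInter fun c' => isClosed_iInter fun _ => ?_)
  · exact isClosed_Icc.preimage (continuous_apply c)
  · exact isClosed_le (continuous_apply c) (continuous_apply c')

lemma meas_chainReg {ι : Type*} [Fintype ι] {N : ℕ} (T : ι ≃ Fin N) :
    MeasurableSet (chainReg T) := by
  unfold chainReg StrictMono
  simp only [Set.ofPred_and, Set.ofPred_forall]
  refine MeasurableSet.inter (MeasurableSet.iInter fun c => ?_) (MeasurableSet.iInter fun c => MeasurableSet.iInter fun c' => MeasurableSet.iInter fun _ => ?_)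
  · exact measurableSet_Icc.preimage (measurable_pi_apply c)
  · exact measurableSet_lt (measurable_pi_apply _) (measurable_pi_apply _)

lemma vol_chainReg {ι : Type*} [Fintype ι] {N : ℕ} (T : ι ≃ Fin N) :
    volume (chainReg T) = volume (chainReg (Equiv.refl (Fin N))) := by
  have h := volume_measurePreserving_piCongrLeft (fun _ : Fin N => ℝ) T
  rw [← h.measure_preimage_equiv]
  congr 1
  ext x
  simp only [chainReg, Set.mem_ofPred_eq, Set.mem_preimage]
  constructor
  · rintro ⟨h1, h2⟩
    refine ⟨fun c => ?_, ?_⟩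
    · have := h1 (T.symm c)
      simpa [MeasurableEquiv.piCongrLeft, Equiv.piCongrLeft_apply] using this
    · intro a b hab
      have := h2 hab
      simpa [MeasurableEquiv.piCongrLeft, Equiv.piCongrLeft_apply] using this
  · rintro ⟨h1, h2⟩
    refine ⟨fun c => ?_, ?_⟩
    · have := h1 (T c)
      simpa [MeasurableEquiv.piCongrLeft, Equiv.piCongrLeft_apply] using this
    · intro a b hab
      have := h2 hab
      simpa [MeasurableEquiv.piCongrLeft, Equiv.piCongrLeft_apply] using this

lemma chain_exists {ι : Type*} [Fintype ι] {N : ℕ} (e : ι ≃ Fin N) (x : ι → ℝ)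
    (hx : Function.Injective x) : ∃ T : ι ≃ Fin N, StrictMono (x ∘ T.symm) := by
  let f := x ∘ e.symm
  let σ := Tuple.sort f
  refine ⟨(σ.trans e.symm).symm, ?_⟩
  have : Monotone (f ∘ σ) := Tuple.monotone_sort f
  apply this.strictMono_of_injective
  exact (hx.comp e.symm.injective).comp σ.injective

lemma chain_disj {ι : Type*} [Fintype ι] {N : ℕ} :
    Pairwise (Function.onFun Disjoint (fun T : ι ≃ Fin N => chainReg T)) := by
  intro T T' hne
  refine Set.disjoint_left.2 ?_
  rintro x ⟨_, h1⟩ ⟨_, h2⟩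
  apply hne
  have hr : Set.range (x ∘ T.symm) = Set.range (x ∘ T'.symm) := by
    rw [T.symm.surjective.range_comp, T'.symm.surjective.range_comp]
  have h3 := StrictMono.range_inj h1 h2 |>.1 hr
  have hinj : Function.Injective x := by
    have := h1.injective
    intro a b hab
    have := @this (T a) (T b) (by simpa using hab)
    exact T.injective this
  have : T.symm = T'.symm := by
    ext a
    exact hinj (congrFun h3 a)
  simpa using congrArg Equiv.symm this

lemma vol_cube {ι : Type*} [Fintype ι] : volume (cube ι) = 1 := by
  have : cube ι = Set.pi Set.univ (fun _ : ι => Set.Icc (0:ℝ) 1) := by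
    ext x; simp only [cube, Set.mem_pi, Set.mem_univ, forall_true_left, Set.mem_ofPred_eq]
  rw [this, volume_pi_pi]; simp

lemma vol_chain (N : ℕ) : (N.factorial : ENNReal) * volume (chainReg (Equiv.refl (Fin N))) = 1 := by
  rw [← vol_cube (ι := Fin N)]
  have h1 : volume (cube (Fin N)) = volume (⋃ T : Fin N ≃ Fin N, chainReg T) := by
    apply measure_congr
    have h0 := null_noninj (ι := Fin N)
    have : ∀ᵐ x : Fin N → ℝ, Function.Injective x := h0
    filter_upwards [this] with x hx
    apply propext
    change x ∈ cube (Fin N) ↔ x ∈ (⋃ T : Fin N ≃ Fin N, chainReg T)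
    simp only [Set.mem_iUnion]
    constructor
    · intro hc
      obtain ⟨T, hT⟩ := chain_exists (Equiv.refl _) x hx
      exact ⟨T, hc, hT⟩
    · rintro ⟨T, h, _⟩; exact h
  rw [h1, measure_iUnion chain_disj (fun T => meas_chainReg T)]
  simp only [vol_chainReg]
  rw [tsum_fintype]
  simp [Fintype.card_perm]

lemma count_vol {ι : Type*} [Fintype ι] (r : ι → ι → Prop) (hr : ∀ c, ¬ r c c) {N : ℕ}
    (hN : Fintype.card ι = N) :
    (N.factorial : ENNReal) * volume (ordPoly r) =
      ((Finset.univ.filter fun T : ι → Fin N => Function.Bijective T ∧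
        ∀ c c', r c c' → T c < T c').card : ENNReal) := by
  let S : Finset (ι ≃ Fin N) := Finset.univ.filter fun T => ∀ c c', r c c' → T c < T c'
  have hcard : (Finset.univ.filter fun T : ι → Fin N => Function.Bijective T ∧
        ∀ c c', r c c' → T c < T c').card = S.card := by
    symm
    apply Finset.card_bij (fun (T : ι ≃ Fin N) _ => (T : ι → Fin N))
    · intro T hT
      simp only [S, Finset.mem_filter, Finset.mem_univ, true_and] at hT ⊢
      exact ⟨T.bijective, hT⟩
    · intro T _ T' _ h
      exact DFunLike.coe_injective h
    · intro T hT
      simp only [S, Finset.mem_filter, Finset.mem_univ, true_and] at hT ⊢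
      exact ⟨Equiv.ofBijective T hT.1, hT.2, rfl⟩
  rw [hcard]
  have h1 : volume (ordPoly r) = volume (⋃ T ∈ S, chainReg T) := by
    apply measure_congr
    have : ∀ᵐ x : ι → ℝ, Function.Injective x := null_noninj (ι := ι)
    filter_upwards [this] with x hx
    apply propext
    change x ∈ ordPoly r ↔ x ∈ (⋃ T ∈ S, chainReg T)
    simp only [Set.mem_iUnion, S, Finset.mem_filter, Finset.mem_univ, true_and, exists_prop]
    constructor
    · intro hc
      obtain ⟨T, hT⟩ := chain_exists (Fintype.equivFinOfCardEq hN) x hx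
      refine ⟨T, fun c c' h => ?_, hc.1, hT⟩
      have h1 := hc.2 c c' h
      have h2 : c ≠ c' := by rintro rfl; exact hr c h
      have h3 : x c < x c' := lt_of_le_of_ne h1 (fun h => h2 (hx h))
      have h4 := hT.lt_iff_lt (a := T c) (b := T c')
      simpa using h4.1 (by simpa using h3)
    · rintro ⟨T, h, h1, h2⟩
      refine ⟨h1, fun c c' hh => ?_⟩
      have := h2 (h c c' hh)
      simpa using this.le
  rw [h1, measure_biUnion_finset (fun T _ T' _ h => chain_disj h) (fun T _ => meas_chainReg T)]
  simp only [vol_chainReg]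
  rw [Finset.sum_const, nsmul_eq_mul, mul_left_comm, vol_chain, mul_one]
def Vd {p : ℕ} (x : Fin p → ℝ) : ℝ := (Matrix.vandermonde x).det

lemma box_det {p : ℕ} (z : Fin (p+1) → ℝ) (hz : Monotone z) (F f : Fin p → ℝ → ℝ)
    (hF : ∀ j y, HasDerivAt (F j) (f j y) y) (hf : ∀ j, Continuous (f j)) :
    ∫ y in Set.univ.pi (fun u : Fin p => Set.Icc (z u.castSucc) (z u.succ)),
      Matrix.det (Matrix.of fun u j => f j (y u)) =
    Matrix.det (Matrix.of fun u j => F j (z u.succ) - F j (z u.castSucc)) := by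
  have hI : ∀ (u j : Fin p), ∫ y in Set.Icc (z u.castSucc) (z u.succ), f j y =
      F j (z u.succ) - F j (z u.castSucc) := by
    intro u j
    rw [integral_Icc_eq_integral_Ioc, ← intervalIntegral.integral_of_le (hz (Fin.castSucc_le_succ u))]
    exact intervalIntegral.integral_eq_sub_of_hasDerivAt (fun y _ => hF j y)
      ((hf j).intervalIntegrable _ _)
  have hIgr : ∀ (u j : Fin p), Integrable (f j) (volume.restrict (Set.Icc (z u.castSucc) (z u.succ))) :=
    fun u j => (hf j).continuousOn.integrableOn_compact isCompact_Icc
  rw [volume_pi, Measure.restrict_pi_pi, ← Matrix.det_transpose (Matrix.of fun u j => F j (z u.succ) - F j (z u.castSucc))]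
  have : ∀ y : Fin p → ℝ, Matrix.det (Matrix.of fun u j => f j (y u)) =
      ∑ σ : Equiv.Perm (Fin p), ((Equiv.Perm.sign σ : ℤ) : ℝ) * ∏ u, f (σ u) (y u) := by
    intro y
    rw [← Matrix.det_transpose, Matrix.det_apply']
    rfl
  simp_rw [this]
  rw [integral_finsetSum, Matrix.det_apply']
  · refine Finset.sum_congr rfl fun σ _ => ?_
    rw [integral_const_mul, integral_fintype_prod_eq_prod (fun u => f (σ u))]
    congr 1
    exact Finset.prod_congr rfl fun u _ => hI u (σ u)
  · intro σ _
    apply Integrable.const_mul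
    exact Integrable.fintype_prod (f := fun u => f (σ u)) fun u => hIgr u (σ u)

lemma det_diff {p : ℕ} (z : Fin (p+1) → ℝ) (F : Fin p → ℝ → ℝ) :
    Matrix.det (Matrix.of fun u j => F j (z u.succ) - F j (z u.castSucc)) =
    Matrix.det (Matrix.of fun u : Fin (p+1) => Fin.cons (1:ℝ) (fun j => F j (z u))) := by
  symm
  let B : Matrix (Fin (p+1)) (Fin (p+1)) ℝ := Matrix.of fun u =>
    Fin.cases (motive := fun _ => Fin (p+1) → ℝ) (Fin.cons (1:ℝ) (fun j => F j (z 0)))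
      (fun u => Fin.cons 0 (fun j => F j (z u.succ) - F j (z u.castSucc))) u
  rw [Matrix.det_eq_of_forall_row_eq_smul_add_pred (B := B) (fun _ => 1)]
  · rw [Matrix.det_succ_column_zero, Fin.sum_univ_succ]
    simp [B]
    congr 1
  · intro j; simp [B]
  · intro i j
    refine Fin.cases ?_ (fun j => ?_) j <;> simp [B]

lemma box_det2 {p : ℕ} (z : Fin (p+1) → ℝ) (hz : Monotone z) (F f : Fin p → ℝ → ℝ)
    (hF : ∀ j y, HasDerivAt (F j) (f j y) y) (hf : ∀ j, Continuous (f j)) :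
    ∫ y in Set.univ.pi (fun u : Fin p => Set.Icc (z u.castSucc) (z u.succ)),
      Matrix.det (Matrix.of fun u j => f j (y u)) =
    Matrix.det (Matrix.of fun u : Fin (p+1) => (Fin.cons (1:ℝ) (fun j => F j (z u)) : Fin (p+1) → ℝ)) := by
  rw [box_det z hz F f hF hf, det_diff]

lemma dixon1 {p : ℕ} (x : Fin (p+1) → ℝ) (hx : Monotone x) :
    ∫ y in Set.univ.pi (fun u : Fin p => Set.Icc (x u.castSucc) (x u.succ)), Vd y =
      Vd x / p.factorial := by
  have h := box_det2 x hx (fun j y => y ^ ((j:ℕ)+1) / ((j:ℕ)+1)) (fun j y => y ^ (j:ℕ)) (by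
    intro j y
    have := (hasDerivAt_pow ((j:ℕ)+1) y).div_const ((j:ℝ)+1)
    refine this.congr_deriv ?_
    have : ((j:ℕ):ℝ) + 1 ≠ 0 := by positivity
    rw [Nat.add_sub_cancel]; push_cast; field_simp) (by intro j; fun_prop)
  have h1 : (∫ y in Set.univ.pi (fun u : Fin p => Set.Icc (x u.castSucc) (x u.succ)), Vd y) = _ := h
  rw [h1]
  have h2 : (Matrix.of fun u : Fin (p+1) => (Fin.cons (1:ℝ) (fun j : Fin p => x u ^ ((j:ℕ)+1) / ((j:ℕ)+1)) : Fin (p+1) → ℝ))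
     = Matrix.of (fun u j => (fun j : Fin (p+1) => (Fin.cons (1:ℝ) (fun j : Fin p => 1/ (((j:ℕ):ℝ)+1)) : Fin (p+1) → ℝ) j) j * Matrix.vandermonde x u j) := by
    ext u j
    refine Fin.cases ?_ (fun j => ?_) j
    · simp [Matrix.vandermonde]
    · simp [Matrix.vandermonde]; field_simp
  rw [h2, Matrix.det_mul_row, Fin.prod_univ_succ]
  simp only [Fin.cons_zero, Fin.cons_succ, one_mul, Vd]
  rw [Finset.prod_div_distrib, Fin.prod_univ_eq_prod_range (fun j => ((j:ℝ)+1)) p]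
  have : ∏ i ∈ range p, ((i:ℝ)+1) = p.factorial := by
    rw [← Finset.prod_range_add_one_eq_factorial]; push_cast; rfl
  rw [this]; simp; field_simp

lemma Vd_one_sub (p : ℕ) : ∃ ε : ℝ, ε * ε = 1 ∧ ∀ x : Fin p → ℝ, Vd (fun u => 1 - x u) = ε * Vd x := by
  refine ⟨∏ i : Fin p, ∏ j ∈ Finset.Ioi i, (-1:ℝ), ?_, ?_⟩
  · rw [← Finset.prod_mul_distrib]
    apply Finset.prod_eq_one
    intro i _
    rw [← Finset.prod_mul_distrib]
    apply Finset.prod_eq_one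
    intro j _; norm_num
  · intro x
    unfold Vd
    rw [Matrix.det_vandermonde, Matrix.det_vandermonde, ← Finset.prod_mul_distrib]
    refine Finset.prod_congr rfl fun i _ => ?_
    rw [← Finset.prod_mul_distrib]
    refine Finset.prod_congr rfl fun j _ => ?_
    ring

lemma Vd_mul {p : ℕ} (y w : Fin p → ℝ) :
    Matrix.det (Matrix.of fun u j : Fin p => y u ^ (j:ℕ) * w u) = Vd y * ∏ u, w u := by
  have := Matrix.det_mul_column w (Matrix.vandermonde y)
  rw [Vd, mul_comm, ← this]
  congr 1
  ext u j
  simp [Matrix.vandermonde, mul_comm]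

/-- Laplace expansion for a last row concentrated in column 0 -/
lemma det_last_row {p : ℕ} (A : Matrix (Fin (p+1)) (Fin (p+1)) ℝ)
    (h : ∀ j : Fin p, A (Fin.last p) j.succ = 0) :
    A.det = (-1)^p * A (Fin.last p) 0 * Matrix.det (Matrix.of fun u j : Fin p => A u.castSucc j.succ) := by
  rw [Matrix.det_succ_row A (Fin.last p), Fin.sum_univ_succ]
  rw [Finset.sum_eq_zero (fun j _ => by rw [h]; simp)]
  simp only [Fin.val_last, Fin.val_zero, add_zero, Fin.succAbove_last, Fin.succAbove_zero]
  rfl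

lemma fact_prod (b n : ℕ) : ∏ j ∈ range n, ((b:ℝ) + 1 + j) = ((b+n).factorial : ℝ) / b.factorial := by
  induction n with
  | zero => simp [Nat.factorial_ne_zero]
  | succ n ih =>
    rw [Finset.prod_range_succ, ih, ← Nat.add_assoc, Nat.factorial_succ]; push_cast; field_simp; ring

lemma dixon2 {n : ℕ} (b : ℕ) (x : Fin n → ℝ) (hx : Monotone x) (hx1 : ∀ u, x u ≤ 1) :
    ∫ y in Set.univ.pi (fun u : Fin n => Set.Icc ((Fin.snoc x 1 : Fin (n+1) → ℝ) u.castSucc) ((Fin.snoc x 1 : Fin (n+1) → ℝ) u.succ)),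
      Vd y * ∏ u, (1 - y u)^b =
      (b.factorial / (b+n).factorial : ℝ) * (Vd x * ∏ u, (1 - x u)^(b+1)) := by
  obtain ⟨ε, hε, hV⟩ := Vd_one_sub n
  set z : Fin (n+1) → ℝ := Fin.snoc x 1 with hz
  have hzm : Monotone z := by
    rw [Fin.monotone_iff_le_succ]
    intro i
    rw [hz, Fin.snoc_castSucc]
    by_cases h : (i:ℕ) + 1 < n
    · have : i.succ = (⟨i+1, h⟩ : Fin n).castSucc := rfl
      rw [this, Fin.snoc_castSucc]; exact hx (Fin.mk_le_mk.2 (Nat.le_succ _))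
    · have : i.succ = Fin.last n := by ext; simp; omega
      rw [this, Fin.snoc_last]; exact hx1 i
  have h := box_det2 z hzm (fun j y => -(1-y) ^ ((j:ℕ)+b+1) / ((j:ℕ)+b+1)) (fun j y => (1-y) ^ (j:ℕ) * (1-y)^b) (by
    intro j y
    have h0 : HasDerivAt (fun y : ℝ => 1 - y) (-1) y := by simpa using (hasDerivAt_id y).const_sub 1
    have := ((h0.fun_pow ((j:ℕ)+b+1)).fun_neg).div_const ((j:ℝ)+b+1)
    refine this.congr_deriv ?_
    have : ((j:ℕ):ℝ) + b + 1 ≠ 0 := by positivity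
    rw [Nat.add_sub_cancel]; push_cast; field_simp; ring) (by intro j; fun_prop)
  rw [det_last_row] at h
  swap
  · intro j; simp [hz]
  have h1 : ∀ y : Fin n → ℝ, Matrix.det (Matrix.of fun u j : Fin n => (1 - y u) ^ (j:ℕ) * (1 - y u)^b) =
     ε * (Vd y * ∏ u, (1 - y u)^b) := by
    intro y
    rw [Vd_mul (fun u => 1 - y u) (fun u => (1 - y u)^b), hV, mul_assoc]
  simp_rw [h1] at h
  rw [integral_const_mul] at h
  have h2 : (Matrix.of fun u j : Fin n => (Matrix.of fun u : Fin (n+1) => (Fin.cons (1:ℝ) (fun j : Fin n => -(1 - z u) ^ ((j:ℕ)+b+1) / ((j:ℕ)+b+1)) : Fin (n+1) → ℝ)) u.castSucc j.succ) =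
     Matrix.of (fun u j => (fun j : Fin n => - (1/ ((b:ℝ)+1+(j:ℕ)))) j * (Matrix.of fun u j : Fin n => (1 - x u) ^ (j:ℕ) * (1 - x u)^(b+1)) u j) := by
    ext u j
    simp [hz]
    have : ((j:ℕ):ℝ) + b + 1 ≠ 0 := by positivity
    have : (b:ℝ) + 1 + (j:ℕ) ≠ 0 := by positivity
    field_simp; ring
  rw [h2, Matrix.det_mul_row, Vd_mul (fun u => 1 - x u) (fun u => (1 - x u)^(b+1)), hV] at h
  have h3 : ∏ j : Fin n, -(1 / ((b:ℝ)+1+(j:ℕ))) = (-1)^n * (b.factorial / (b+n).factorial) := by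
    rw [Finset.prod_neg, Finset.prod_div_distrib, Fin.prod_univ_eq_prod_range (fun j => ((b:ℝ)+1+j)) n, fact_prod]
    simp
  rw [h3] at h
  have h4 : ((-1:ℝ)^n * (-1)^n) = 1 := by rw [← mul_pow]; norm_num
  have h5 : ∀ I R : ℝ, ε * I = ε * R → I = R := by
    intro I R h
    have := congrArg (ε * ·) h
    simp only [← mul_assoc, hε, one_mul] at this; exact this
  apply h5
  rw [h]
  simp
  linear_combination (ε * (Vd x * ∏ u, (1 - x u) ^ (b+1)) * (b.factorial / (b+n).factorial : ℝ)) * h4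

lemma beta_nat (a b : ℕ) : ∫ y in (0:ℝ)..1, y^a * (1-y)^b = (a.factorial * b.factorial / (a+b+1).factorial : ℝ) := by
  induction b generalizing a with
  | zero =>
    simp [Nat.factorial_succ]
    field_simp
  | succ b ih =>
    have h : ∫ y in (0:ℝ)..1, (((a:ℝ)+1) * (y^a * (1-y)^(b+1)) - ((b:ℝ)+1) * (y^(a+1) * (1-y)^b)) = 0 := by
      rw [intervalIntegral.integral_eq_sub_of_hasDerivAt (f := fun y => y^(a+1) * (1-y)^(b+1))]
      · simp
      · intro y _
        have h0 : HasDerivAt (fun y : ℝ => 1 - y) (-1) y := by simpa using (hasDerivAt_id y).const_sub 1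
        refine ((hasDerivAt_pow (a+1) y).fun_mul (h0.fun_pow (b+1))).congr_deriv ?_
        simp only [Nat.add_sub_cancel]; push_cast; ring
      · apply Continuous.intervalIntegrable; fun_prop
    rw [intervalIntegral.integral_sub (by apply Continuous.intervalIntegrable; fun_prop) (by apply Continuous.intervalIntegrable; fun_prop),
      intervalIntegral.integral_const_mul, intervalIntegral.integral_const_mul, ih] at h
    have e1 : a + (b+1) + 1 = a + 1 + b + 1 := by ring
    rw [e1, Nat.factorial_succ b]
    rw [Nat.factorial_succ a] at h
    push_cast at h ⊢
    have : (a:ℝ)+1 ≠ 0 := by positivity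
    have h2 : ((a:ℝ)+1) * (∫ y in (0:ℝ)..1, y^a * (1-y)^(b+1)) = ((a:ℝ)+1) * (a.factorial * ((b+1) * b.factorial) / (a+1+b+1).factorial) := by
      rw [sub_eq_zero.1 h]; ring
    exact mul_left_cancel₀ this h2

lemma det_first_row {p : ℕ} (A : Matrix (Fin (p+1)) (Fin (p+1)) ℝ)
    (h0 : A 0 0 = 1) (h : ∀ j : Fin p, A 0 j.succ = 0) :
    A.det = Matrix.det (Matrix.of fun u j : Fin p => A u.succ j.succ) := by
  rw [Matrix.det_succ_row_zero A, Fin.sum_univ_succ]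
  rw [Finset.sum_eq_zero (fun j _ => by rw [h]; simp)]
  simp only [Fin.val_zero, add_zero, Fin.succAbove_zero, h0, pow_zero, one_mul]
  rfl

lemma mono_snoc {n : ℕ} (x : Fin n → ℝ) (hx : Monotone x) (hx1 : ∀ u, x u ≤ 1) :
    Monotone (Fin.snoc x 1 : Fin (n+1) → ℝ) := by
  rw [Fin.monotone_iff_le_succ]
  intro i
  rw [Fin.snoc_castSucc]
  by_cases h : (i:ℕ) + 1 < n
  · have : i.succ = (⟨i+1, h⟩ : Fin n).castSucc := rfl
    rw [this, Fin.snoc_castSucc]; exact hx (Fin.mk_le_mk.2 (Nat.le_succ _))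
  · have : i.succ = Fin.last n := by ext; simp; omega
    rw [this, Fin.snoc_last]; exact hx1 i

lemma mono_cons {n : ℕ} (x : Fin (n+1) → ℝ) (hx : Monotone x) (hx1 : 0 ≤ x 0) :
    Monotone (Fin.cons 0 x : Fin (n+2) → ℝ) := by
  rw [Fin.monotone_iff_le_succ]
  intro i
  rw [Fin.cons_succ]
  refine Fin.cases ?_ (fun i => ?_) i
  · simpa using hx1
  · rw [← Fin.succ_castSucc, Fin.cons_succ]; exact hx (Fin.castSucc_le_succ i)

lemma dixon3 {p : ℕ} (a b : ℕ) (x : Fin p → ℝ) (hx : Monotone x) (hx0 : ∀ u, 0 ≤ x u) (hx1 : ∀ u, x u ≤ 1) :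
    ∫ y in Set.univ.pi (fun u : Fin (p+1) => Set.Icc ((Fin.cons 0 (Fin.snoc x 1 : Fin (p+1) → ℝ) : Fin (p+2) → ℝ) u.castSucc) ((Fin.cons 0 (Fin.snoc x 1 : Fin (p+1) → ℝ) : Fin (p+2) → ℝ) u.succ)),
      Vd y * ∏ u, (y u ^ a * (1 - y u)^b) =
      (a.factorial * b.factorial / (a+b+1+p).factorial : ℝ) * (Vd x * ∏ u, (x u ^ (a+1) * (1 - x u)^(b+1))) := by
  set z : Fin (p+2) → ℝ := Fin.cons 0 (Fin.snoc x 1 : Fin (p+1) → ℝ) with hz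
  have hzm : Monotone z := by
    apply mono_cons _ (mono_snoc x hx hx1)
    cases p with
    | zero => simp [Fin.snoc]
    | succ p =>
      have : (0 : Fin (p+2)) = Fin.castSucc 0 := rfl
      rw [this, Fin.snoc_castSucc]; exact hx0 _
  have hz0 : z 0 = 0 := by simp [hz]
  have hz1 : z (Fin.last (p+1)) = 1 := by
    rw [hz, ← Fin.succ_last, Fin.cons_succ, Fin.snoc_last]
  let f : Fin (p+1) → ℝ → ℝ := Fin.cons (fun y => y^a * (1-y)^b)
    (fun j y => (y^((j:ℕ)+1) - ((a:ℝ)+1+(j:ℕ))/((a+b+1 : ℕ)+1+(j:ℕ)) * y^(j:ℕ)) * (y^a * (1-y)^b))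
  let F : Fin (p+1) → ℝ → ℝ := Fin.cons (fun t => ∫ y in (0:ℝ)..t, y^a * (1-y)^b)
    (fun j y => -(1/((a+b+1 : ℕ)+1+(j:ℕ)) : ℝ) * (y ^ (j:ℕ) * (y^(a+1) * (1-y)^(b+1))))
  have h := box_det2 z hzm F f (by
    intro j y
    refine Fin.cases ?_ (fun j => ?_) j
    · simp only [F, f, Fin.cons_zero]
      have hc : Continuous (fun y : ℝ => y^a * (1-y)^b) := by fun_prop
      exact intervalIntegral.integral_hasDerivAt_right (hc.intervalIntegrable _ _)
        (hc.stronglyMeasurableAtFilter _ _) hc.continuousAt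
    · simp only [F, f, Fin.cons_succ]
      have h0 : HasDerivAt (fun y : ℝ => 1 - y) (-1) y := by simpa using (hasDerivAt_id y).const_sub 1
      have h1 := ((hasDerivAt_pow ((j:ℕ)+(a+1)) y).fun_mul (h0.fun_pow (b+1))).const_mul (-(1/((a+b+1 : ℕ)+1+(j:ℕ)) : ℝ))
      have e0 : (fun y : ℝ => -(1/((a+b+1 : ℕ)+1+(j:ℕ)) : ℝ) * (y ^ (j:ℕ) * (y^(a+1) * (1-y)^(b+1)))) =
          fun y => -(1/((a+b+1 : ℕ)+1+(j:ℕ)) : ℝ) * (y ^ ((j:ℕ) + (a+1)) * (1-y)^(b+1)) := by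
        ext y; ring
      rw [e0]
      refine h1.congr_deriv ?_
      · have e : (j:ℕ) + (a+1) - 1 = (j:ℕ) + a := by omega
        rw [e]
        simp only [Nat.add_sub_cancel]; push_cast
        have : (a:ℝ)+b+1+1+(j:ℕ) ≠ 0 := by positivity
        field_simp; ring) (by
    intro j
    refine Fin.cases ?_ (fun j => ?_) j
    · simp only [f, Fin.cons_zero]; fun_prop
    · simp only [f, Fin.cons_succ]; fun_prop)
  rw [det_first_row, det_last_row] at h
  rotate_left
  · intro j
    have : (Fin.last p).succ = Fin.last (p+1) := rfl
    simp [this, hz1, F]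
  · simp
  · intro j
    simp only [Matrix.of_apply, Fin.cons_succ, hz0]
    refine Fin.cases ?_ (fun j => ?_) j
    · simp [F]
    · simp [F]
  have h1 : ∀ y : Fin (p+1) → ℝ, Matrix.det (Matrix.of fun u j => f j (y u)) =
      Vd y * ∏ u, (y u ^ a * (1 - y u)^b) := by
    intro y
    rw [← Vd_mul y]
    symm
    apply Matrix.det_eq_of_forall_col_eq_smul_add_pred (fun j => ((a:ℝ)+1+(j:ℕ))/((a+b+1 : ℕ)+1+(j:ℕ)))
    · intro i; simp [f]
    · intro i j; simp [f]; ring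
  simp_rw [h1] at h
  rw [h]
  have h2 : (Matrix.of fun u j : Fin p => (Matrix.of fun u j : Fin (p+1) => (Matrix.of fun u : Fin (p+2) => (Fin.cons (1:ℝ) (fun j : Fin (p+1) => F j (z u)) : Fin (p+2) → ℝ)) u.succ j.succ) u.castSucc j.succ) =
     Matrix.of (fun u j => (fun j : Fin p => - (1/ ((a+b+1:ℕ)+1+(j:ℕ) : ℝ))) j * (Matrix.of fun u j : Fin p => (x u) ^ (j:ℕ) * ((x u)^(a+1) * (1 - x u)^(b+1))) u j) := by
    ext u j
    simp [hz, F]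
  rw [h2, Matrix.det_mul_row, Vd_mul]
  have h3 : ∏ j : Fin p, -(1 / ((a+b+1:ℕ)+1+(j:ℕ) : ℝ)) = (-1)^p * ((a+b+1).factorial / (a+b+1+p).factorial) := by
    rw [Finset.prod_neg, Finset.prod_div_distrib, Fin.prod_univ_eq_prod_range (fun j => ((a+b+1:ℕ)+1+j : ℝ)) p, fact_prod]
    simp
  rw [h3]
  have h4 : ((-1:ℝ)^p * (-1)^p) = 1 := by rw [← mul_pow]; norm_num
  have h5 : (Fin.last p).succ = Fin.last (p+1) := rfl
  simp only [Matrix.of_apply, Fin.cons_succ, h5, hz1, F, Fin.cons_zero, beta_nat]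
  have : ((a+b+1).factorial : ℝ) ≠ 0 := by positivity
  field_simp
  linear_combination (Vd x * ∏ u, (x u ^ (a+1) * (1 - x u) ^ (b+1))) * h4

def Om (p : ℕ) : Set (Fin p → ℝ) := {x | Monotone x ∧ ∀ u, x u ∈ Set.Icc (0:ℝ) 1}

def wt (p a b : ℕ) (x : Fin p → ℝ) : ℝ := Vd x * ∏ u, (x u ^ a * (1 - x u)^b)

lemma Vd_cont (p : ℕ) : Continuous (fun x : Fin p → ℝ => Vd x) := by
  unfold Vd
  simp_rw [Matrix.det_vandermonde]
  fun_prop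

lemma wt_cont (p a b : ℕ) : Continuous (wt p a b) := by
  have := Vd_cont p
  unfold wt
  fun_prop

lemma wt_nonneg {p : ℕ} (a b : ℕ) {x : Fin p → ℝ} (hx : x ∈ Om p) : 0 ≤ wt p a b x := by
  unfold wt Vd
  rw [Matrix.det_vandermonde]
  refine mul_nonneg (Finset.prod_nonneg fun i _ => Finset.prod_nonneg fun j hj => ?_)
    (Finset.prod_nonneg fun u _ => ?_)
  · have := hx.1 (le_of_lt (Finset.mem_Ioi.1 hj)); linarith
  · have := (hx.2 u).1
    have := (hx.2 u).2
    have : 0 ≤ 1 - x u := by linarith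
    positivity

lemma Om_closed (p : ℕ) : IsClosed (Om p) := by
  unfold Om Monotone
  simp only [Set.ofPred_and, Set.ofPred_forall]
  refine IsClosed.inter (isClosed_iInter fun c => isClosed_iInter fun c' => isClosed_iInter fun _ => ?_) (isClosed_iInter fun c => ?_)
  · exact isClosed_le (continuous_apply c) (continuous_apply c')
  · exact isClosed_Icc.preimage (continuous_apply c)

open scoped ENNReal

lemma lint_split {ι κ : Type*} [Fintype ι] [Fintype κ] {q : ℕ} (e : ι ⊕ Fin q ≃ κ)
    (h : (κ → ℝ) → ℝ≥0∞) (hm : Measurable h) :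
    ∫⁻ T, h T = ∫⁻ x : Fin q → ℝ, ∫⁻ a : ι → ℝ, h (fun c => Sum.elim a x (e.symm c)) := by
  have h1 := (volume_measurePreserving_piCongrLeft (fun _ : κ => ℝ) e)
  have h2 := (volume_measurePreserving_sumPiEquivProdPi_symm (fun _ : ι ⊕ Fin q => ℝ))
  rw [← (h1.comp h2).lintegral_comp hm]
  rw [Measure.volume_eq_prod, lintegral_prod_symm]
  · refine lintegral_congr fun x => lintegral_congr fun a => ?_
    congr 1
    ext c
    obtain ⟨c, rfl⟩ := e.surjective c
    simp only [Function.comp_apply, MeasurableEquiv.coe_piCongrLeft, Equiv.piCongrLeft_apply_apply, Equiv.symm_apply_apply]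
    cases c <;> rfl
  · exact (hm.comp ((h1.comp h2).measurable)).aemeasurable

lemma step {ι κ : Type*} [Fintype ι] [Fintype κ] {p q : ℕ} (X : Set (ι → ℝ)) (Y : Set (κ → ℝ))
    (hXm : MeasurableSet X) (hYm : MeasurableSet Y)
    (e : ι ⊕ Fin q ≃ κ) (d : Fin p → ι) (R : (Fin q → ℝ) → (Fin p → ℝ) → Prop)
    (hR : ∀ x, MeasurableSet {y | R x y})
    (hXY : ∀ T : κ → ℝ, T ∈ Y ↔ (fun i => T (e (.inl i))) ∈ X ∧
      R (fun u => T (e (.inr u))) (fun u => T (e (.inl (d u)))))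
    (w : (Fin p → ℝ) → ℝ≥0∞) (w' : (Fin q → ℝ) → ℝ≥0∞) 
    (hX : ∀ g : (Fin p → ℝ) → ℝ≥0∞, Measurable g → ∫⁻ T in X, g (fun u => T (d u)) = ∫⁻ y in Om p, g y * w y)
    (hD : ∀ x, ∫⁻ y in Om p, Set.indicator {y | R x y} (fun _ => 1) y * w y = (Om q).indicator w' x)
    (g : (Fin q → ℝ) → ℝ≥0∞) (hg : Measurable g) :
    ∫⁻ T in Y, g (fun u => T (e (.inr u))) = ∫⁻ x in Om q, g x * w' x := by
  rw [← lintegral_indicator hYm, lint_split e, ← lintegral_indicator (Om_closed q).measurableSet]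
  · refine lintegral_congr fun x => ?_
    have h1 : ∀ a : ι → ℝ, (Y.indicator (fun T => g (fun u => T (e (.inr u))))) (fun c => Sum.elim a x (e.symm c)) =
        g x * X.indicator (fun a => Set.indicator {y | R x y} (fun _ => (1:ℝ≥0∞)) (fun u => a (d u))) a := by
      intro a
      have h2 := hXY (fun c => Sum.elim a x (e.symm c))
      simp only [Equiv.symm_apply_apply, Sum.elim_inl, Sum.elim_inr] at h2
      by_cases hY : (fun c => Sum.elim a x (e.symm c)) ∈ Y
      · obtain ⟨h3, h4⟩ := h2.1 hY
        rw [Set.indicator_of_mem hY]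
        have h3' : a ∈ X := h3
        rw [Set.indicator_of_mem h3', Set.indicator_of_mem (by exact h4)]
        simp
      · rw [Set.indicator_of_notMem hY]
        by_cases h3 : a ∈ X
        · rw [Set.indicator_of_mem h3, Set.indicator_of_notMem, mul_zero]
          intro h4
          exact hY (h2.2 ⟨h3, h4⟩)
        · rw [Set.indicator_of_notMem h3, mul_zero]
    simp_rw [h1]
    have hmi : Measurable (Set.indicator {y | R x y} (fun _ => (1:ℝ≥0∞))) :=
      measurable_const.indicator (hR x)
    rw [lintegral_const_mul, lintegral_indicator hXm, hX _ hmi, hD]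
    · by_cases hx : x ∈ Om q
      · rw [Set.indicator_of_mem hx, Set.indicator_of_mem hx]
      · rw [Set.indicator_of_notMem hx, Set.indicator_of_notMem hx, mul_zero]
    · refine Measurable.indicator ?_ hXm
      exact hmi.comp (by fun_prop)
  · refine Measurable.indicator ?_ hYm
    exact hg.comp (by fun_prop)

def zbox {p q : ℕ} (z : (Fin q → ℝ) → Fin (p+1) → ℝ) (x : Fin q → ℝ) : Set (Fin p → ℝ) :=
  Set.univ.pi (fun u : Fin p => Set.Icc (z x u.castSucc) (z x u.succ))

lemma zbox_mono {p : ℕ} (z : Fin (p+1) → ℝ) (y : Fin p → ℝ)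
    (hy : y ∈ Set.univ.pi (fun u : Fin p => Set.Icc (z u.castSucc) (z u.succ))) : Monotone z ∧ Monotone y := by
  have h1 : ∀ u : Fin p, z u.castSucc ≤ y u ∧ y u ≤ z u.succ := fun u => hy u (Set.mem_univ _)
  have hz : Monotone z := by
    rw [Fin.monotone_iff_le_succ]
    intro u
    exact (h1 u).1.trans (h1 u).2
  refine ⟨hz, fun u v huv => ?_⟩
  rcases huv.eq_or_lt with rfl | huv
  · exact le_rfl
  · exact (h1 u).2.trans ((hz (Fin.succ_le_castSucc_iff.2 huv)).trans (h1 v).1)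

lemma stepZ {p q : ℕ} (z : (Fin q → ℝ) → Fin (p+1) → ℝ)
    (hz1 : ∀ x ∈ Om q, Monotone (z x) ∧ ∀ u, z x u ∈ Set.Icc (0:ℝ) 1)
    (hz2 : ∀ x, Monotone (z x) → Monotone x)
    (a b a' b' : ℕ) (c k : ℝ) (hc : 0 ≤ c)
    (hdix : ∀ x ∈ Om q, ∫ y in zbox z x, wt p a b y = k * wt q a' b' x) (x : Fin q → ℝ) :
    ∫⁻ y in Om p, Set.indicator {y | (∀ u, x u ∈ Set.Icc (0:ℝ) 1) ∧ y ∈ zbox z x} (fun _ => 1) y *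
        ENNReal.ofReal (c * wt p a b y) =
      (Om q).indicator (fun x => ENNReal.ofReal (c * k * wt q a' b' x)) x := by
  by_cases hx : x ∈ Om q
  · rw [Set.indicator_of_mem hx]
    obtain ⟨hm, hcube⟩ := hz1 x hx
    have hsub : zbox z x ⊆ Om p := by
      intro y hy
      refine ⟨(zbox_mono _ y hy).2, fun u => ⟨?_, ?_⟩⟩
      · exact (hcube _).1.trans (hy u (Set.mem_univ _)).1
      · exact (hy u (Set.mem_univ _)).2.trans (hcube _).2
    have hbm : MeasurableSet (zbox z x) := MeasurableSet.univ_pi fun u => measurableSet_Icc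
    have h1 : ∀ y, Set.indicator {y | (∀ u, x u ∈ Set.Icc (0:ℝ) 1) ∧ y ∈ zbox z x} (fun _ => (1:ℝ≥0∞)) y *
        ENNReal.ofReal (c * wt p a b y) = (zbox z x).indicator (fun y => ENNReal.ofReal (c * wt p a b y)) y := by
      intro y
      by_cases hy : y ∈ zbox z x
      · rw [Set.indicator_of_mem hy, Set.indicator_of_mem (show y ∈ {y | (∀ u, x u ∈ Set.Icc (0:ℝ) 1) ∧ y ∈ zbox z x} from ⟨hx.2, hy⟩), one_mul]
      · rw [Set.indicator_of_notMem hy, Set.indicator_of_notMem (fun h => hy h.2), zero_mul]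
    simp_rw [h1]
    rw [lintegral_indicator hbm, Measure.restrict_restrict hbm, Set.inter_eq_left.2 hsub]
    rw [← ofReal_integral_eq_lintegral_ofReal]
    · rw [integral_const_mul, hdix x hx, mul_assoc]
    · apply ContinuousOn.integrableOn_compact
      · exact isCompact_univ_pi fun u => isCompact_Icc
      · exact (continuous_const.mul (wt_cont p a b)).continuousOn
    · filter_upwards [ae_restrict_mem hbm] with y hy
      exact mul_nonneg hc (wt_nonneg a b (hsub hy))
  · rw [Set.indicator_of_notMem hx]
    have : {y | (∀ u, x u ∈ Set.Icc (0:ℝ) 1) ∧ y ∈ zbox z x} = ∅ := by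
      rw [Set.eq_empty_iff_forall_notMem]
      rintro y ⟨h1, h2⟩
      exact hx ⟨hz2 x (zbox_mono _ y h2).1, h1⟩
    rw [this]; simp

def Dg (m n i0 j0 : ℕ) : Finset (ℕ × ℕ) :=
  ((Finset.range m) ×ˢ (Finset.range n)).filter fun c => c.2 + i0 ≤ c.1 + j0

lemma mem_Dg {m n i0 j0 : ℕ} {c : ℕ × ℕ} : c ∈ Dg m n i0 j0 ↔ (c.1 < m ∧ c.2 < n) ∧ c.2 + i0 ≤ c.1 + j0 := by
  simp [Dg]

def adj (D : Finset (ℕ × ℕ)) (c c' : D) : Prop :=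
  (c.1.1 = c'.1.1 ∧ c.1.2 + 1 = c'.1.2) ∨ (c.1.2 = c'.1.2 ∧ c.1.1 + 1 = c'.1.1)

def Claim (m n i0 j0 p b : ℕ) (c : ℝ) : Prop :=
  ∃ h : ∀ u : Fin p, (i0 + (u:ℕ), j0 + (u:ℕ)) ∈ Dg m n i0 j0,
  ∀ g : (Fin p → ℝ) → ℝ≥0∞, Measurable g →
    ∫⁻ T in ordPoly (adj (Dg m n i0 j0)), g (fun u => T ⟨_, h u⟩) =
      ∫⁻ x in Om p, g x * ENNReal.ofReal (c * wt p j0 b x)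

lemma mkE {D1 D2 : Finset (ℕ × ℕ)} {q : ℕ} (δ : Fin q → ℕ × ℕ) (hinj : Function.Injective δ)
    (h : ∀ c, c ∈ D2 ↔ c ∈ D1 ∨ ∃ u, δ u = c) (hd : ∀ u, δ u ∉ D1) :
    ∃ e : D1 ⊕ Fin q ≃ D2, (∀ i, (e (.inl i)).1 = i.1) ∧ (∀ u, (e (.inr u)).1 = δ u) := by
  let f : D1 ⊕ Fin q → D2 := Sum.elim (fun i => ⟨i.1, (h _).2 (Or.inl i.2)⟩) (fun u => ⟨δ u, (h _).2 (Or.inr ⟨u, rfl⟩)⟩)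
  have hf : Function.Bijective f := by
    constructor
    · rintro (i | u) (i' | u') hh
      · have := congrArg Subtype.val hh
        simp only [f, Sum.elim_inl] at this
        rw [Subtype.ext this]
      · have := congrArg Subtype.val hh
        simp only [f, Sum.elim_inl, Sum.elim_inr] at this
        exact absurd (this ▸ i.2) (hd u')
      · have := congrArg Subtype.val hh
        simp only [f, Sum.elim_inl, Sum.elim_inr] at this
        exact absurd (this ▸ i'.2) (hd u)
      · have := congrArg Subtype.val hh
        simp only [f, Sum.elim_inr] at this
        rw [hinj this]
    · rintro ⟨c, hc⟩
      rcases (h c).1 hc with h1 | ⟨u, rfl⟩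
      · exact ⟨.inl ⟨c, h1⟩, rfl⟩
      · exact ⟨.inr u, rfl⟩
  exact ⟨Equiv.ofBijective f hf, fun i => rfl, fun u => rfl⟩

def OP (D : Finset (ℕ × ℕ)) (t : ℕ × ℕ → ℝ) : Prop :=
  (∀ i j, (i, j) ∈ D → t (i, j) ∈ Set.Icc (0:ℝ) 1) ∧
  (∀ i j, (i, j) ∈ D → (i, j+1) ∈ D → t (i, j) ≤ t (i, j+1)) ∧
  (∀ i j, (i, j) ∈ D → (i+1, j) ∈ D → t (i, j) ≤ t (i+1, j))

lemma ordPoly_iff_OP {D : Finset (ℕ × ℕ)} (T : D → ℝ) (t : ℕ × ℕ → ℝ) (h : ∀ c : D, T c = t c.1) :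
    T ∈ ordPoly (adj D) ↔ OP D t := by
  constructor
  · rintro ⟨h1, h2⟩
    refine ⟨fun i j hc => ?_, fun i j hc hc' => ?_, fun i j hc hc' => ?_⟩
    · have := h1 ⟨_, hc⟩; rwa [h] at this
    · have := h2 ⟨_, hc⟩ ⟨_, hc'⟩ (Or.inl ⟨rfl, rfl⟩); rwa [h, h] at this
    · have := h2 ⟨_, hc⟩ ⟨_, hc'⟩ (Or.inr ⟨rfl, rfl⟩); rwa [h, h] at this
  · rintro ⟨h1, h2, h3⟩
    refine ⟨fun c => ?_, ?_⟩
    · rw [h]; exact h1 _ _ c.2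
    · rintro ⟨⟨i, j⟩, hc⟩ ⟨⟨i', j'⟩, hc'⟩ (⟨ha, hb⟩ | ⟨ha, hb⟩)
      · simp only at ha hb; subst ha hb; rw [h, h]; exact h2 _ _ hc hc'
      · simp only at ha hb; subst ha hb; rw [h, h]; exact h3 _ _ hc hc'

lemma claim_step (m n i1 j1 i0 j0 p q b b' : ℕ) (c k : ℝ) (hc : 0 ≤ c) (hC : Claim m n i1 j1 p b c)
    (hD : ∀ c, c ∈ Dg m n i0 j0 ↔ c ∈ Dg m n i1 j1 ∨ ∃ u : Fin q, (i0 + (u:ℕ), j0 + (u:ℕ)) = c)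
    (hd : ∀ u : Fin q, (i0 + (u:ℕ), j0 + (u:ℕ)) ∉ Dg m n i1 j1)
    (z : (Fin q → ℝ) → Fin (p+1) → ℝ)
    (hz1 : ∀ x ∈ Om q, Monotone (z x) ∧ ∀ u, z x u ∈ Set.Icc (0:ℝ) 1)
    (hz2 : ∀ x, Monotone (z x) → Monotone x)
    (hdix : ∀ x ∈ Om q, ∫ y in zbox z x, wt p j1 b y = k * wt q j0 b' x)
    (hOP : ∀ t : ℕ × ℕ → ℝ, OP (Dg m n i0 j0) t ↔ OP (Dg m n i1 j1) t ∧
      (∀ u : Fin q, t (i0 + (u:ℕ), j0 + (u:ℕ)) ∈ Set.Icc (0:ℝ) 1) ∧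
      (fun u : Fin p => t (i1 + (u:ℕ), j1 + (u:ℕ))) ∈ zbox z (fun u : Fin q => t (i0 + (u:ℕ), j0 + (u:ℕ)))) :
    Claim m n i0 j0 q b' (c * k) := by
  obtain ⟨hdm, hX⟩ := hC
  obtain ⟨e, he1, he2⟩ := mkE (fun u : Fin q => (i0 + (u:ℕ), j0 + (u:ℕ)))
    (by intro u v huv; simp at huv; omega) hD hd
  refine ⟨fun u => (hD _).2 (Or.inr ⟨u, rfl⟩), fun g hg => ?_⟩
  have key := step (ordPoly (adj (Dg m n i1 j1))) (ordPoly (adj (Dg m n i0 j0))) (meas_ordPoly _) (meas_ordPoly _)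
    e (fun u => ⟨_, hdm u⟩) (fun x y => (∀ u, x u ∈ Set.Icc (0:ℝ) 1) ∧ y ∈ zbox z x)
    (by
      intro x
      by_cases hx : ∀ u, x u ∈ Set.Icc (0:ℝ) 1
      · have : {y | (∀ u, x u ∈ Set.Icc (0:ℝ) 1) ∧ y ∈ zbox z x} = zbox z x := by
          ext y; exact ⟨fun h => h.2, fun h => ⟨hx, h⟩⟩
        rw [this]
        exact MeasurableSet.univ_pi (fun u => (measurableSet_Icc : MeasurableSet (Set.Icc (z x u.castSucc) (z x u.succ))))
      · have : {y | (∀ u, x u ∈ Set.Icc (0:ℝ) 1) ∧ y ∈ zbox z x} = ∅ := by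
          ext y; exact ⟨fun h => hx h.1, fun h => h.elim⟩
        rw [this]
        exact MeasurableSet.empty)
    (by
      intro T
      let t : ℕ × ℕ → ℝ := fun c => if h : c ∈ Dg m n i0 j0 then T ⟨c, h⟩ else 0
      have ht : ∀ c : Dg m n i0 j0, T c = t c.1 := by
        intro c; simp only [t, dif_pos c.2]
      have ht1 : ∀ i, T (e (.inl i)) = t i.1 := by intro i; rw [ht, he1]
      have ht2 : ∀ u, T (e (.inr u)) = t (i0 + (u:ℕ), j0 + (u:ℕ)) := by intro i; rw [ht, he2]
      rw [ordPoly_iff_OP T t ht, ordPoly_iff_OP (fun i => T (e (.inl i))) t ht1, hOP t]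
      simp only [ht1, ht2])
    (fun y => ENNReal.ofReal (c * wt p j1 b y)) (fun x => ENNReal.ofReal (c * k * wt q j0 b' x)) hX
    (fun x => stepZ z hz1 hz2 j1 b j0 b' c k hc hdix x) g hg
  rw [← key]
  have : ∀ u : Fin q, (⟨_, (hD _).2 (Or.inr ⟨u, rfl⟩)⟩ : Dg m n i0 j0) = e (.inr u) :=
    fun u => Subtype.ext (he2 u).symm
  simp_rw [this]

lemma claim1 (m n i0 p : ℕ) (c : ℝ) (hc : 0 ≤ c) (hm : i0 + 1 + p = m) (hp : p < n)
    (hC : Claim m n (i0+1) 0 p 0 c) : Claim m n i0 0 (p+1) 0 (c * (1 / p.factorial)) := by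
  refine claim_step m n (i0+1) 0 i0 0 p (p+1) 0 0 c _ hc hC ?_ ?_ (fun x => x) ?_ ?_ ?_ ?_
  · rintro ⟨i, j⟩
    simp only [mem_Dg]
    constructor
    · rintro ⟨⟨h1, h2⟩, h3⟩
      by_cases h : j + (i0 + 1) ≤ i + 0
      · exact Or.inl ⟨⟨h1, h2⟩, h⟩
      · refine Or.inr ⟨⟨j, by omega⟩, ?_⟩
        simp only [Prod.mk.injEq]; omega
    · rintro (h | ⟨u, h⟩)
      · omega
      · simp only [Prod.mk.injEq] at h; have := u.2; omega
  · intro u; simp only [mem_Dg]; omega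
  · exact fun x hx => hx
  · exact fun x hx => hx
  · intro x hx
    have := dixon1 x hx.1
    simp only [zbox, wt, pow_zero, mul_one, Finset.prod_const_one]
    rw [this]; ring
  · intro t
    simp only [zbox, OP, mem_Dg, Set.mem_pi, Set.mem_univ, forall_true_left, Set.mem_Icc, Fin.val_castSucc, Fin.val_succ]
    constructor
    · rintro ⟨h1, h2, h3⟩
      refine ⟨⟨fun i j h => h1 i j (by omega), fun i j h h' => h2 i j (by omega) (by omega),
        fun i j h h' => h3 i j (by omega) (by omega)⟩, fun u => h1 _ _ (by have := u.2; omega), fun u => ⟨?_, ?_⟩⟩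
      · have := h3 (i0+u) (0+u) (by have := u.2; omega) (by have := u.2; omega)
        rwa [show i0 + (u:ℕ) + 1 = i0 + 1 + u by ring] at this
      · have := h2 (i0+1+u) (0+u) (by have := u.2; omega) (by have := u.2; omega)
        rwa [show i0 + 1 + (u:ℕ) = i0 + (u + 1) by ring] at this ⊢
    · rintro ⟨⟨h1, h2, h3⟩, h4, h5⟩
      refine ⟨fun i j h => ?_, fun i j h h' => ?_, fun i j h h' => ?_⟩
      · by_cases hh : j + (i0 + 1) ≤ i + 0
        · exact h1 i j (by omega)
        · have := h4 ⟨j, by omega⟩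
          simp only at this
          rwa [show i0 + j = i by omega, show 0 + j = j by omega] at this
      · by_cases hh : j + 1 + (i0 + 1) ≤ i + 0
        · exact h2 i j (by omega) (by omega)
        · have := (h5 ⟨j, by omega⟩).2
          simp only at this
          rwa [show i0 + 1 + j = i by omega, show i0 + (j+1) = i by omega, zero_add, zero_add] at this
      · by_cases hh : j + (i0 + 1) ≤ i + 0
        · exact h3 i j (by omega) (by omega)
        · have := (h5 ⟨j, by omega⟩).1
          simp only at this
          rwa [show i0 + 1 + j = i + 1 by omega, show i0 + j = i by omega, zero_add] at this

lemma snoc_lt {n : ℕ} (x : Fin n → ℝ) (u : Fin (n+1)) (h : (u:ℕ) < n) :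
    (Fin.snoc x 1 : Fin (n+1) → ℝ) u = x ⟨u, h⟩ := by
  exact Fin.snoc_castSucc (α := fun _ => ℝ) 1 x ⟨u, h⟩

lemma snoc_ge {n : ℕ} (x : Fin n → ℝ) (u : Fin (n+1)) (h : ¬ (u:ℕ) < n) :
    (Fin.snoc x 1 : Fin (n+1) → ℝ) u = 1 := by
  have : u = Fin.last n := by ext; simp; omega
  rw [this, Fin.snoc_last]

lemma snoc_mem {n : ℕ} (x : Fin n → ℝ) (hx : ∀ u, x u ∈ Set.Icc (0:ℝ) 1) (u : Fin (n+1)) :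
    (Fin.snoc x 1 : Fin (n+1) → ℝ) u ∈ Set.Icc (0:ℝ) 1 := by
  by_cases h : (u:ℕ) < n
  · rw [snoc_lt x u h]; exact hx _
  · rw [snoc_ge x u h]; simp

lemma mono_of_snoc {n : ℕ} (x : Fin n → ℝ) (h : Monotone (Fin.snoc x 1 : Fin (n+1) → ℝ)) : Monotone x := by
  intro u v huv
  have := h (Fin.castSucc_le_castSucc_iff.2 huv)
  simpa [Fin.snoc_castSucc] using this

lemma claim2 (m n i0 b : ℕ) (c : ℝ) (hc : 0 ≤ c) (hm : i0 + 1 + n + b = m)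
    (hC : Claim m n (i0+1) 0 n b c) : Claim m n i0 0 n (b+1) (c * (b.factorial / (b+n).factorial)) := by
  refine claim_step m n (i0+1) 0 i0 0 n n b (b+1) c _ hc hC ?_ ?_ (fun x => Fin.snoc x 1) ?_ ?_ ?_ ?_
  · rintro ⟨i, j⟩
    simp only [mem_Dg]
    constructor
    · rintro ⟨⟨h1, h2⟩, h3⟩
      by_cases h : j + (i0 + 1) ≤ i + 0
      · exact Or.inl ⟨⟨h1, h2⟩, h⟩
      · refine Or.inr ⟨⟨j, by omega⟩, ?_⟩
        simp only [Prod.mk.injEq]; omega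
    · rintro (h | ⟨u, h⟩)
      · omega
      · simp only [Prod.mk.injEq] at h; have := u.2; omega
  · intro u; simp only [mem_Dg]; omega
  · exact fun x hx => ⟨mono_snoc x hx.1 fun u => (hx.2 u).2, snoc_mem x hx.2⟩
  · exact fun x hx => mono_of_snoc x hx
  · intro x hx
    have := dixon2 b x hx.1 (fun u => (hx.2 u).2)
    simp only [zbox, wt, pow_zero, one_mul]
    rw [this]
  · intro t
    simp only [zbox, OP, mem_Dg, Set.mem_pi, Set.mem_univ, forall_true_left, Set.mem_Icc, Fin.val_castSucc, Fin.val_succ, Fin.snoc_castSucc]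
    constructor
    · rintro ⟨h1, h2, h3⟩
      refine ⟨⟨fun i j h => h1 i j (by omega), fun i j h h' => h2 i j (by omega) (by omega),
        fun i j h h' => h3 i j (by omega) (by omega)⟩, fun u => h1 _ _ (by have := u.2; omega), fun u => ⟨?_, ?_⟩⟩
      · have := h3 (i0+u) (0+u) (by have := u.2; omega) (by have := u.2; omega)
        rwa [show i0 + (u:ℕ) + 1 = i0 + 1 + u by ring] at this
      · by_cases hu : (u:ℕ) + 1 < n
        · rw [snoc_lt _ _ (by simpa using hu)]
          simp only [Fin.val_succ]
          have := h2 (i0+1+u) (0+u) (by have := u.2; omega) (by have := u.2; omega)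
          rwa [show i0 + 1 + (u:ℕ) = i0 + (u + 1) by ring] at this ⊢
        · rw [snoc_ge _ _ (by simpa using hu)]
          exact (h1 _ _ (by have := u.2; omega)).2
    · rintro ⟨⟨h1, h2, h3⟩, h4, h5⟩
      refine ⟨fun i j h => ?_, fun i j h h' => ?_, fun i j h h' => ?_⟩
      · by_cases hh : j + (i0 + 1) ≤ i + 0
        · exact h1 i j (by omega)
        · have := h4 ⟨j, by omega⟩
          simp only at this
          rwa [show i0 + j = i by omega, show 0 + j = j by omega] at this
      · by_cases hh : j + 1 + (i0 + 1) ≤ i + 0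
        · exact h2 i j (by omega) (by omega)
        · have := (h5 ⟨j, by omega⟩).2
          rw [snoc_lt _ _ (by simp; omega)] at this
          simp only [Fin.val_succ] at this
          rwa [show i0 + 1 + j = i by omega, show i0 + (j+1) = i by omega, zero_add, zero_add] at this
      · by_cases hh : j + (i0 + 1) ≤ i + 0
        · exact h3 i j (by omega) (by omega)
        · have := (h5 ⟨j, by omega⟩).1
          simp only at this
          rwa [show i0 + 1 + j = i + 1 by omega, show i0 + j = i by omega, zero_add] at this

lemma claim3 (m n a p b : ℕ) (c : ℝ) (hc : 0 ≤ c) (hn : p + 1 + a = n) (hm : p + 1 + b = m)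
    (hC : Claim m n 0 a (p+1) b c) :
    Claim m n 0 (a+1) p (b+1) (c * (a.factorial * b.factorial / (a+b+1+p).factorial)) := by
  refine claim_step m n 0 a 0 (a+1) (p+1) p b (b+1) c _ hc hC ?_ ?_
    (fun x => (Fin.cons 0 (Fin.snoc x 1 : Fin (p+1) → ℝ) : Fin (p+2) → ℝ)) ?_ ?_ ?_ ?_
  · rintro ⟨i, j⟩
    simp only [mem_Dg]
    constructor
    · rintro ⟨⟨h1, h2⟩, h3⟩
      by_cases h : j + 0 ≤ i + a
      · exact Or.inl ⟨⟨h1, h2⟩, h⟩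
      · refine Or.inr ⟨⟨i, by omega⟩, ?_⟩
        simp only [Prod.mk.injEq]; omega
    · rintro (h | ⟨u, h⟩)
      · omega
      · simp only [Prod.mk.injEq] at h; have := u.2; omega
  · intro u; simp only [mem_Dg]; omega
  · refine fun x hx => ⟨mono_cons _ (mono_snoc x hx.1 fun u => (hx.2 u).2) (snoc_mem x hx.2 0).1, fun u => ?_⟩
    refine Fin.cases ?_ (fun u => ?_) u
    · simp
    · rw [Fin.cons_succ]; exact snoc_mem x hx.2 u
  · intro x hx
    apply mono_of_snoc
    intro u v huv
    have := hx (Fin.succ_le_succ_iff.2 huv)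
    simpa using this
  · intro x hx
    have := dixon3 a b x hx.1 (fun u => (hx.2 u).1) (fun u => (hx.2 u).2)
    simp only [zbox, wt]
    rw [this]
  · intro t
    simp only [zbox, OP, mem_Dg, Set.mem_pi, Set.mem_univ, forall_true_left, Set.mem_Icc, Fin.cons_succ]
    constructor
    · rintro ⟨h1, h2, h3⟩
      refine ⟨⟨fun i j h => h1 i j (by omega), fun i j h h' => h2 i j (by omega) (by omega),
        fun i j h h' => h3 i j (by omega) (by omega)⟩, fun u => h1 _ _ (by have := u.2; omega), fun u => ⟨?_, ?_⟩⟩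
      · refine Fin.cases ?_ (fun u => ?_) u
        · simp only [Fin.castSucc_zero, Fin.cons_zero]
          exact (h1 _ _ (by simp; omega)).1
        · rw [← Fin.succ_castSucc, Fin.cons_succ, Fin.snoc_castSucc]
          have := h3 (0+u) (a+1+u) (by have := u.2; omega) (by have := u.2; omega)
          simp only [Fin.val_succ]
          rwa [show a + ((u:ℕ) + 1) = a + 1 + u by ring]
      · by_cases hu : (u:ℕ) < p
        · rw [snoc_lt _ _ hu]
          have := h2 (0+u) (a+u) (by have := u.2; omega) (by have := u.2; omega)
          simp only
          rwa [show a + 1 + (u:ℕ) = a + u + 1 by ring]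
        · rw [snoc_ge _ _ hu]
          exact (h1 _ _ (by have := u.2; omega)).2
    · rintro ⟨⟨h1, h2, h3⟩, h4, h5⟩
      refine ⟨fun i j h => ?_, fun i j h h' => ?_, fun i j h h' => ?_⟩
      · by_cases hh : j ≤ i + a
        · exact h1 i j (by omega)
        · have := h4 ⟨i, by omega⟩
          simp only at this
          rwa [show 0 + i = i by omega, show a + 1 + i = j by omega] at this
      · by_cases hh : j + 1 ≤ i + a
        · exact h2 i j (by omega) (by omega)
        · have := (h5 ⟨i, by omega⟩).2
          rw [snoc_lt _ _ (by simp; omega)] at this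
          simp only at this
          rwa [show a + 1 + i = j + 1 by omega, show a + i = j by omega, zero_add] at this
      · by_cases hh : j ≤ i + a
        · exact h3 i j (by omega) (by omega)
        · have := (h5 (⟨i, by omega⟩ : Fin p).succ).1
          rw [← Fin.succ_castSucc, Fin.cons_succ, Fin.snoc_castSucc] at this
          simp only [Fin.val_succ] at this
          rwa [show a + 1 + i = j by omega, show a + (i+1) = j by omega, zero_add, zero_add] at this

lemma claim0 (m n : ℕ) : Claim m n m 0 0 0 1 := by
  refine ⟨fun u => u.elim0, fun g hg => ?_⟩
  have hE : IsEmpty (Dg m n m 0) := ⟨fun c => by have := c.2; rw [mem_Dg] at this; omega⟩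
  have h1 : ordPoly (adj (Dg m n m 0)) = Set.univ := by
    ext T; simp only [Set.mem_univ, iff_true]
    exact ⟨fun c => hE.elim c, fun c => hE.elim c⟩
  have h2 : Om 0 = Set.univ := by
    ext T; simp only [Set.mem_univ, iff_true]
    exact ⟨fun c => c.elim0, fun c => c.elim0⟩
  rw [h1, h2]
  have h3 : ∀ (f : Fin 0 → ℝ), f = ![] := fun f => Subsingleton.elim _ _
  simp only [Measure.restrict_univ]
  have h4 : ∀ x : Fin 0 → ℝ, g x * ENNReal.ofReal (1 * wt 0 0 0 x) = g ![] := by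
    intro x; rw [h3 x]; simp [wt, Vd]
  simp_rw [h4]
  have h5 : ∀ T : Dg m n m 0 → ℝ, (g fun u : Fin 0 => T ⟨_, (u.elim0 : (m + (u:ℕ), 0 + (u:ℕ)) ∈ Dg m n m 0)⟩) = g ![] := by
    intro T; rw [h3 (fun u => _)]
  simp only [h5, lintegral_const]
  congr 1
  have h6 : (volume : Measure (Dg m n m 0 → ℝ)) Set.univ = 1 := by
    rw [volume_pi, Measure.pi_univ]; simp
  have h7 : (volume : Measure (Fin 0 → ℝ)) Set.univ = 1 := by
    rw [volume_pi, Measure.pi_univ]; simp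
  rw [h6, h7]

lemma chain1 (m n p : ℕ) (hp : p ≤ n) (hnm : n ≤ m) :
    Claim m n (m - p) 0 p 0 (∏ t ∈ range p, (1 / (t.factorial : ℝ))) := by
  induction p with
  | zero => simpa using claim0 m n
  | succ p ih =>
    have h := ih (by omega)
    rw [show m - p = (m - (p+1)) + 1 by omega] at h
    have := claim1 m n (m - (p+1)) p _ (by positivity) (by omega) (by omega) h
    rwa [Finset.prod_range_succ]

lemma chain2 (m n b : ℕ) (hb : n + b ≤ m) :
    Claim m n (m - n - b) 0 n b ((∏ t ∈ range n, (1 / (t.factorial : ℝ))) * ∏ t ∈ range b, ((t.factorial : ℝ) / (t + n).factorial)) := by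
  induction b with
  | zero => simpa using chain1 m n n le_rfl (by omega)
  | succ b ih =>
    have h := ih (by omega)
    rw [show m - n - b = (m - n - (b+1)) + 1 by omega] at h
    have := claim2 m n (m - n - (b+1)) b _ (by positivity) (by omega) h
    rwa [Finset.prod_range_succ, ← mul_assoc]

lemma chain3 (m n s : ℕ) (hs : s ≤ n) (hnm : n ≤ m) :
    Claim m n 0 s (n - s) (m - n + s) ((∏ t ∈ range n, (1 / (t.factorial : ℝ))) * (∏ t ∈ range (m-n), ((t.factorial : ℝ) / (t + n).factorial))
      * ∏ a ∈ range s, (a.factorial * (m-n+a).factorial / (m+a).factorial : ℝ)) := by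
  induction s with
  | zero => simpa using chain2 m n (m-n) (by omega)
  | succ s ih =>
    have h := ih (by omega)
    rw [show n - s = (n - (s+1)) + 1 by omega] at h
    have := claim3 m n s (n - (s+1)) (m - n + s) _ (by positivity) (by omega) (by omega) h
    rw [Finset.prod_range_succ, ← mul_assoc]
    rwa [show s + (m - n + s) + 1 + (n - (s+1)) = m + s by omega] at this

def cc (m r s : ℕ) : ℝ := (∏ t ∈ range m, (1 / (t.factorial : ℝ))) * (∏ b ∈ range (m - r), (b.factorial : ℝ)) *
  ∏ a ∈ range s, ((a.factorial : ℝ) / (m + a).factorial)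

lemma cc_pos (m r s : ℕ) : 0 < cc m r s := by
  unfold cc
  positivity

lemma chain4 (m r s : ℕ) (hm : r + s ≤ m) : Claim m (r+s) 0 s r (m - r) (cc m r s) := by
  have h := chain3 m (r+s) s (by omega) hm
  rw [show r + s - s = r by omega, show m - (r + s) + s = m - r by omega] at h
  convert h using 1
  unfold cc
  have h1 : ∏ t ∈ range m, (1 / (t.factorial : ℝ)) = (∏ t ∈ range (r+s), (1 / (t.factorial : ℝ))) *
      ∏ t ∈ range (m - (r+s)), (1 / ((t + (r+s)).factorial : ℝ)) := by
    have : m = (r+s) + (m - (r+s)) := by omega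
    conv_lhs => rw [this, Finset.prod_range_add]
    simp only [add_comm]
  have h2 : ∏ b ∈ range (m - r), (b.factorial : ℝ) = (∏ t ∈ range (m - (r+s)), (t.factorial : ℝ)) *
      ∏ a ∈ range s, ((m - (r+s) + a).factorial : ℝ) := by
    have : m - r = (m - (r+s)) + s := by omega
    rw [this, Finset.prod_range_add]
  rw [h1, h2]
  simp only [Finset.prod_div_distrib, Finset.prod_mul_distrib]
  simp only [Finset.prod_const_one]
  field_simp

def Sel (r a b : ℕ) : ℝ := ∫ x in Om r, wt r a b x

lemma Om_compact (p : ℕ) : IsCompact (Om p) := by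
  refine IsCompact.of_isClosed_subset (isCompact_univ_pi (fun _ : Fin p => isCompact_Icc (a := (0:ℝ)) (b := 1))) (Om_closed p) ?_
  intro x hx u _
  exact hx.2 u

lemma vol_Dg (m r s : ℕ) (hm : r + s ≤ m) :
    volume (ordPoly (adj (Dg m (r+s) 0 s))) = ENNReal.ofReal (cc m r s * Sel r s (m - r)) := by
  obtain ⟨_, h⟩ := chain4 m r s hm
  have := h (fun _ => 1) measurable_const
  simp only [lintegral_const, Measure.restrict_apply MeasurableSet.univ, Set.univ_inter, one_mul] at this
  rw [this, Sel, ← integral_const_mul, ← ofReal_integral_eq_lintegral_ofReal]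
  · exact ContinuousOn.integrableOn_compact (Om_compact r) (continuous_const.mul (wt_cont _ _ _)).continuousOn
  · filter_upwards [ae_restrict_mem (Om_closed r).measurableSet] with y hy
    exact mul_nonneg (cc_pos _ _ _).le (wt_nonneg _ _ hy)

lemma adj_full (m n i0 j0 N : ℕ) (T : Dg m n i0 j0 → Fin N) :
    (∀ c c' : Dg m n i0 j0, adj _ c c' → T c < T c') ↔
    (∀ c c' : Dg m n i0 j0, ((c : ℕ × ℕ).1 = (c' : ℕ × ℕ).1 → (c : ℕ × ℕ).2 < (c' : ℕ × ℕ).2 → T c < T c') ∧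
      ((c : ℕ × ℕ).2 = (c' : ℕ × ℕ).2 → (c : ℕ × ℕ).1 < (c' : ℕ × ℕ).1 → T c < T c')) := by
  constructor
  · intro h
    have h1 : ∀ d i j (hc : (i, j) ∈ Dg m n i0 j0) (hc' : (i, j + 1 + d) ∈ Dg m n i0 j0), T ⟨_, hc⟩ < T ⟨_, hc'⟩ := by
      intro d
      induction d with
      | zero => intro i j hc hc'; exact h _ _ (Or.inl ⟨rfl, rfl⟩)
      | succ d ih =>
        intro i j hc hc'
        have hm : (i, j + 1 + d) ∈ Dg m n i0 j0 := by
          simp only [mem_Dg] at hc hc' ⊢; omega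
        exact (ih i j hc hm).trans (h _ _ (Or.inl ⟨rfl, by simp only; ring⟩))
    have h2 : ∀ d i j (hc : (i, j) ∈ Dg m n i0 j0) (hc' : (i + 1 + d, j) ∈ Dg m n i0 j0), T ⟨_, hc⟩ < T ⟨_, hc'⟩ := by
      intro d
      induction d with
      | zero => intro i j hc hc'; exact h _ _ (Or.inr ⟨rfl, rfl⟩)
      | succ d ih =>
        intro i j hc hc'
        have hm : (i + 1 + d, j) ∈ Dg m n i0 j0 := by
          simp only [mem_Dg] at hc hc' ⊢; omega
        exact (ih i j hc hm).trans (h _ _ (Or.inr ⟨rfl, by simp only; ring⟩))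
    rintro ⟨⟨i, j⟩, hc⟩ ⟨⟨i', j'⟩, hc'⟩
    constructor
    · intro ha hb
      simp only at ha hb
      subst ha
      obtain ⟨d, rfl⟩ := Nat.exists_eq_add_of_lt hb
      have := h1 d i j hc (by convert hc' using 2; ring)
      convert this using 4; ring
    · intro ha hb
      simp only at ha hb
      subst ha
      obtain ⟨d, rfl⟩ := Nat.exists_eq_add_of_lt hb
      have := h2 d i j hc (by convert hc' using 2; ring)
      convert this using 4; ring
  · rintro h c c' (⟨h1, h2⟩ | ⟨h1, h2⟩)
    · exact (h c c').1 h1 (by omega)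
    · exact (h c c').2 h1 (by omega)

lemma syt_vol (m n i0 j0 : ℕ) :
    ((Dg m n i0 j0).card.factorial : ENNReal) * volume (ordPoly (adj (Dg m n i0 j0))) = (sytCard (Dg m n i0 j0) : ENNReal) := by
  rw [count_vol (adj (Dg m n i0 j0)) (by rintro c (⟨_, h⟩ | ⟨_, h⟩) <;> omega) (N := (Dg m n i0 j0).card) (by simp)]
  congr 1
  unfold sytCard
  congr 1
  ext T
  simp only [Finset.mem_filter, Finset.mem_univ, true_and, adj_full]

lemma Sel_nonneg (r a b : ℕ) : 0 ≤ Sel r a b :=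
  setIntegral_nonneg (Om_closed r).measurableSet fun x hx => wt_nonneg a b hx

lemma syt_Sel (m r s : ℕ) (hm : r + s ≤ m) :
    (sytCard (Dg m (r+s) 0 s) : ℝ) = (Dg m (r+s) 0 s).card.factorial * (cc m r s * Sel r s (m - r)) := by
  have h := syt_vol m (r+s) 0 s
  rw [vol_Dg m r s hm] at h
  have := congrArg ENNReal.toReal h
  rw [ENNReal.toReal_mul, ENNReal.toReal_ofReal (mul_nonneg (cc_pos _ _ _).le (Sel_nonneg _ _ _))] at this
  simpa using this.symm

lemma syt_transpose (D D' : Finset (ℕ × ℕ)) (h : ∀ i j, (i, j) ∈ D ↔ (j, i) ∈ D') : sytCard D = sytCard D' := by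
  let e : D ≃ D' := 
    { toFun := fun c => ⟨(c.1.2, c.1.1), (h _ _).1 c.2⟩
      invFun := fun c => ⟨(c.1.2, c.1.1), (h _ _).2 c.2⟩
      left_inv := fun c => rfl
      right_inv := fun c => rfl }
  have hcard : D.card = D'.card := by simpa using Fintype.card_congr e
  unfold sytCard
  refine Finset.card_bij' (fun T _ => fun c => Fin.cast hcard (T (e.symm c))) (fun T _ => fun c => Fin.cast hcard.symm (T (e c))) ?_ ?_ ?_ ?_
  · intro T hT
    simp only [Finset.mem_filter, Finset.mem_univ, true_and] at hT ⊢
    refine ⟨(finCongr hcard).bijective.comp (hT.1.comp e.symm.bijective), fun c c' => ⟨?_, ?_⟩⟩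
    · intro h1 h2; exact (hT.2 (e.symm c) (e.symm c')).2 h1 h2
    · intro h1 h2; exact (hT.2 (e.symm c) (e.symm c')).1 h1 h2
  · intro T hT
    simp only [Finset.mem_filter, Finset.mem_univ, true_and] at hT ⊢
    refine ⟨(finCongr hcard.symm).bijective.comp (hT.1.comp e.bijective), fun c c' => ⟨?_, ?_⟩⟩
    · intro h1 h2; exact (hT.2 (e c) (e c')).2 h1 h2
    · intro h1 h2; exact (hT.2 (e c) (e c')).1 h1 h2
  · intro T _; rfl
  · intro T _; rfl

lemma Sel_zero (a b : ℕ) : Sel 0 a b = 1 := by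
  have h2 : Om 0 = Set.univ := by
    ext T; simp only [Set.mem_univ, iff_true]
    exact ⟨fun c => c.elim0, fun c => c.elim0⟩
  have h7 : (volume : Measure (Fin 0 → ℝ)) Set.univ = 1 := by
    rw [volume_pi, Measure.pi_univ]; simp
  simp [Sel, h2, wt, Vd, Measure.real, h7]

lemma card_Dg (m r s : ℕ) (hm : r + s ≤ m) :
    (Dg m (r+s) 0 s).card + (r.choose 2) = m * (r + s) := by
  have h0 : m * (r+s) = (Finset.range m ×ˢ Finset.range (r+s)).card := by simp
  rw [h0, Dg, ← Finset.card_filter_add_card_filter_not (s := Finset.range m ×ˢ Finset.range (r+s)) (fun c => c.2 + 0 ≤ c.1 + s)]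
  congr 1
  have h1 : ((Finset.range r).sigma (fun j => Finset.range j)).card = r.choose 2 := by
    rw [Finset.card_sigma]; simp [Finset.sum_range_id, Nat.choose_two_right]
  rw [← h1]
  symm
  refine Finset.card_bij' (fun c _ => ⟨c.2 - s, c.1⟩) (fun c _ => (c.2, c.1 + s)) ?_ ?_ ?_ ?_
  · rintro ⟨i, j⟩ h
    simp at h ⊢; omega
  · rintro ⟨i, j⟩ h
    simp at h ⊢; omega
  · rintro ⟨i, j⟩ h
    simp at h ⊢; omega
  · rintro ⟨i, j⟩ h
    simp

open Polynomial in
def Qp {ι : Type*} (s : Finset ι) (x : ι → ℝ) : Polynomial ℝ := ∏ j ∈ s, (1 + C (x j) * X)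

open Polynomial in
lemma Qp_erase {ι : Type*} (s : Finset ι) (x : ι → ℝ) {i : ι} (hi : i ∈ s) :
    Qp (s.erase i) x = Qp s x - X * (C (x i) * Qp (s.erase i) x) := by
  have : Qp s x = (1 + C (x i) * X) * Qp (s.erase i) x := (Finset.mul_prod_erase s _ hi).symm
  rw [this]; ring

open Polynomial in
lemma Qp_deriv {ι : Type*} (s : Finset ι) (x : ι → ℝ) :
    derivative (Qp s x) = ∑ i ∈ s, C (x i) * Qp (s.erase i) x := by
  unfold Qp
  rw [Polynomial.derivative_prod_finset]
  refine Finset.sum_congr rfl fun i _ => ?_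
  rw [derivative_add, derivative_one, zero_add, derivative_C_mul, derivative_X, mul_one, mul_comm]

open Polynomial in
lemma aomoto_poly {ι : Type*} (s : Finset ι) (x : ι → ℝ) (hx : Function.Injective x) (A B : ℝ) :
    2 * ∑ i ∈ s, C (A - B * x i + ∑ j ∈ s.erase i, x i * (1 - x i) / (x i - x j)) * Qp (s.erase i) x =
      C (2 * A) * (C (s.card : ℝ) * Qp s x - X * derivative (Qp s x)) - C (2 * B) * derivative (Qp s x) +
      (C ((s.card : ℝ) * (s.card - 1)) * Qp s x - C (2 * ((s.card : ℝ) - 1)) * (X + 1) * derivative (Qp s x)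
        + X * (X + 1) * derivative (derivative (Qp s x))) := by
  have hd := Qp_deriv s x
  have hdd : derivative (derivative (Qp s x)) = ∑ i ∈ s, ∑ j ∈ s.erase i, C (x i) * (C (x j) * Qp ((s.erase i).erase j) x) := by
    rw [hd, derivative_sum]
    refine Finset.sum_congr rfl fun i _ => ?_
    rw [derivative_C_mul, Qp_deriv, Finset.mul_sum]
  have h1 : ∑ i ∈ s, Qp (s.erase i) x = C (s.card : ℝ) * Qp s x - X * derivative (Qp s x) := by
    rw [hd, Finset.mul_sum, Finset.sum_congr rfl (fun i hi => Qp_erase s x hi), Finset.sum_sub_distrib]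
    simp
  have hcard : ∀ i ∈ s, ((s.erase i).card : ℝ) = s.card - 1 := by
    intro i hi
    rw [Finset.card_erase_of_mem hi, Nat.cast_sub (Finset.card_pos.2 ⟨i, hi⟩)]; simp
  -- sums over ordered pairs
  have hi1 : ∀ i ∈ s, ∑ j ∈ s.erase i, Qp ((s.erase i).erase j) x =
      C ((s.card : ℝ) - 1) * Qp (s.erase i) x - X * ∑ j ∈ s.erase i, C (x j) * Qp ((s.erase i).erase j) x := by
    intro i hi
    rw [Finset.sum_congr rfl (fun j hj => Qp_erase (s.erase i) x hj), Finset.sum_sub_distrib, Finset.mul_sum, Finset.sum_const, ← hcard i hi]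
    simp
  have h2 : ∑ i ∈ s, ∑ j ∈ s.erase i, C (x i) * Qp ((s.erase i).erase j) x =
      C ((s.card : ℝ) - 1) * derivative (Qp s x) - X * derivative (derivative (Qp s x)) := by
    rw [hdd, hd, Finset.mul_sum, Finset.mul_sum, ← Finset.sum_sub_distrib]
    refine Finset.sum_congr rfl fun i hi => ?_
    rw [← Finset.mul_sum, hi1 i hi, ← Finset.mul_sum]
    ring
  have hswap : ∀ f : ι → ι → Polynomial ℝ, ∑ i ∈ s, ∑ j ∈ s.erase i, f i j = ∑ i ∈ s, ∑ j ∈ s.erase i, f j i := by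
    intro f
    rw [Finset.sum_comm']
    intro a b
    simp only [Finset.mem_erase]
    constructor
    · rintro ⟨h1, h2, h3⟩; exact ⟨⟨h2.symm, h1⟩, h3⟩
    · rintro ⟨⟨h1, h2⟩, h3⟩; exact ⟨h2, h1.symm, h3⟩
  have hcomm : ∀ i j, (s.erase i).erase j = (s.erase j).erase i := fun i j => Finset.erase_right_comm
  have h2' : ∑ i ∈ s, ∑ j ∈ s.erase i, C (x j) * Qp ((s.erase i).erase j) x =
      C ((s.card : ℝ) - 1) * derivative (Qp s x) - X * derivative (derivative (Qp s x)) := by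
    rw [hswap, ← h2]
    exact Finset.sum_congr rfl fun i hi => Finset.sum_congr rfl fun j hj => by rw [hcomm]
  have h3 : ∑ i ∈ s, ∑ j ∈ s.erase i, Qp ((s.erase i).erase j) x =
      C ((s.card : ℝ) - 1) * (C (s.card : ℝ) * Qp s x - X * derivative (Qp s x)) -
      X * (C ((s.card : ℝ) - 1) * derivative (Qp s x) - X * derivative (derivative (Qp s x))) := by
    rw [Finset.sum_congr rfl hi1, Finset.sum_sub_distrib, ← Finset.mul_sum, ← Finset.mul_sum, h1, h2']
  have h4 : 2 * ∑ i ∈ s, C (∑ j ∈ s.erase i, x i * (1 - x i) / (x i - x j)) * Qp (s.erase i) x =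
      ∑ i ∈ s, ∑ j ∈ s.erase i, (Qp ((s.erase i).erase j) x - C (x i) * Qp ((s.erase i).erase j) x
        - C (x j) * Qp ((s.erase i).erase j) x - X * (C (x i) * (C (x j) * Qp ((s.erase i).erase j) x))) := by
    have h5 : ∑ i ∈ s, C (∑ j ∈ s.erase i, x i * (1 - x i) / (x i - x j)) * Qp (s.erase i) x =
        ∑ i ∈ s, ∑ j ∈ s.erase i, C (x i * (1 - x i) / (x i - x j)) * Qp (s.erase i) x := by
      refine Finset.sum_congr rfl fun i _ => ?_
      rw [map_sum, Finset.sum_mul]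
    rw [h5, two_mul]
    nth_rewrite 2 [hswap]
    rw [← Finset.sum_add_distrib]
    refine Finset.sum_congr rfl fun i hi => ?_
    rw [← Finset.sum_add_distrib]
    refine Finset.sum_congr rfl fun j hj => ?_
    have hji : j ≠ i := (Finset.mem_erase.1 hj).1
    have hjs : j ∈ s := (Finset.mem_erase.1 hj).2
    have e1 : Qp (s.erase i) x = (1 + C (x j) * X) * Qp ((s.erase i).erase j) x :=
      (Finset.mul_prod_erase _ _ hj).symm
    have e2 : Qp (s.erase j) x = (1 + C (x i) * X) * Qp ((s.erase i).erase j) x := by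
      rw [hcomm]
      exact (Finset.mul_prod_erase _ _ (Finset.mem_erase.2 ⟨hji.symm, hi⟩)).symm
    have hne : x i - x j ≠ 0 := sub_ne_zero.2 fun h => hji (hx h).symm
    have hne' : x j - x i ≠ 0 := sub_ne_zero.2 fun h => hji (hx h)
    rw [e1, e2]
    set q := Qp ((s.erase i).erase j) x
    have f1 : x i * (1 - x i) / (x i - x j) + x j * (1 - x j) / (x j - x i) = 1 - x i - x j := by
      rw [show x j - x i = -(x i - x j) by ring, div_neg]; field_simp; ring
    have f2 : x i * (1 - x i) / (x i - x j) * x j + x j * (1 - x j) / (x j - x i) * x i = - (x i * x j) := by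
      rw [show x j - x i = -(x i - x j) by ring, div_neg]; field_simp; ring
    calc _ = C (x i * (1 - x i) / (x i - x j) + x j * (1 - x j) / (x j - x i)) * q
          + C (x i * (1 - x i) / (x i - x j) * x j + x j * (1 - x j) / (x j - x i) * x i) * X * q := by
          simp only [map_add, map_mul]; ring
      _ = _ := by rw [f1, f2]; simp only [map_sub, map_mul, map_neg, map_one]; ring
  have h6 : ∑ i ∈ s, C (A - B * x i + ∑ j ∈ s.erase i, x i * (1 - x i) / (x i - x j)) * Qp (s.erase i) x =
      C A * ∑ i ∈ s, Qp (s.erase i) x - C B * ∑ i ∈ s, C (x i) * Qp (s.erase i) x +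
      ∑ i ∈ s, C (∑ j ∈ s.erase i, x i * (1 - x i) / (x i - x j)) * Qp (s.erase i) x := by
    rw [Finset.mul_sum, Finset.mul_sum, ← Finset.sum_sub_distrib, ← Finset.sum_add_distrib]
    refine Finset.sum_congr rfl fun i _ => ?_
    rw [map_add, map_sub, map_mul]; ring
  rw [h6, mul_add, h4, h1, ← hd]
  simp only [Finset.sum_sub_distrib, h3, h2, h2']
  have h7 : ∑ i ∈ s, ∑ j ∈ s.erase i, X * (C (x i) * (C (x j) * Qp ((s.erase i).erase j) x)) = X * derivative (derivative (Qp s x)) := by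
    rw [hdd]; simp only [Finset.mul_sum]
  rw [h7]
  simp only [map_mul, map_sub, map_one]
  have : (C 2 : Polynomial ℝ) = 2 := rfl
  rw [this]
  ring

open Polynomial in
lemma aomoto_coeff {ι : Type*} (s : Finset ι) (x : ι → ℝ) (hx : Function.Injective x) (A B : ℝ) (κ : ℕ) :
    2 * ∑ i ∈ s, (A - B * x i + ∑ j ∈ s.erase i, x i * (1 - x i) / (x i - x j)) * (Qp (s.erase i) x).coeff κ =
      (2 * A + (s.card - κ - 1)) * (s.card - κ) * (Qp s x).coeff κ -
      (2 * B + (2 * s.card - 2 - κ)) * (κ + 1) * (Qp s x).coeff (κ + 1) := by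
  have h := congrArg (fun p => Polynomial.coeff p κ) (aomoto_poly s x hx A B)
  have t0 : (2 : Polynomial ℝ) = C 2 := rfl
  have t1 : ∀ p : Polynomial ℝ, (X * derivative p).coeff κ = κ * p.coeff κ := by
    intro p
    cases κ with
    | zero => simp
    | succ κ => rw [coeff_X_mul, coeff_derivative]; push_cast; ring
  have t2 : ∀ p : Polynomial ℝ, (X * (X * derivative (derivative p))).coeff κ = κ * (κ - 1) * p.coeff κ := by
    intro p
    cases κ with
    | zero => simp
    | succ κ =>
      rw [coeff_X_mul]
      cases κ with
      | zero => simp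
      | succ κ => rw [coeff_X_mul, coeff_derivative, coeff_derivative]; push_cast; ring
  have t3 : ∀ p : Polynomial ℝ, (X * (X + 1) * derivative (derivative p)) = X * (X * derivative (derivative p)) + X * (derivative (derivative p)) := by
    intro p; ring
  have t4 : ∀ (c : ℝ) (p : Polynomial ℝ), C c * (X + 1) * derivative p = C c * (X * derivative p) + C c * derivative p := by
    intro c p; ring
  rw [t3, t4, t0] at h
  simp only [coeff_add, coeff_sub, coeff_C_mul, finsetSum_coeff, t1, t2, coeff_derivative] at h
  rw [h]
  ring

lemma insertNth_mem_Om {r : ℕ} (i : Fin (r+1)) (t : ℝ) (y : Fin r → ℝ) :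
    (i.insertNth t y : Fin (r+1) → ℝ) ∈ Om (r+1) ↔ y ∈ Om r ∧
      t ∈ Set.Icc ((Fin.cons 0 (Fin.snoc y 1 : Fin (r+1) → ℝ) : Fin (r+2) → ℝ) i.castSucc)
        ((Fin.cons 0 (Fin.snoc y 1 : Fin (r+1) → ℝ) : Fin (r+2) → ℝ) i.succ) := by
  constructor
  · rintro ⟨h1, h2⟩
    have h3 : ∀ j, y j = (i.insertNth t y : Fin (r+1) → ℝ) (i.succAbove j) := fun j => by simp
    have h4 : t = (i.insertNth t y : Fin (r+1) → ℝ) i := by simp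
    refine ⟨⟨fun a b hab => ?_, fun u => ?_⟩, ?_, ?_⟩
    · rw [h3, h3]; exact h1 ((Fin.strictMono_succAbove i).monotone hab)
    · rw [h3]; exact h2 _
    · by_cases hi : (i:ℕ) = 0
      · have : i.castSucc = 0 := by ext; simpa using hi
        rw [this, Fin.cons_zero, h4]; exact (h2 i).1
      · have : i.castSucc = (⟨i - 1, by omega⟩ : Fin r).castSucc.succ := by ext; simp; omega
        rw [this, Fin.cons_succ, Fin.snoc_castSucc, h3]
        refine le_trans (h1 ?_) h4.ge
        apply le_of_lt
        rw [Fin.succAbove_of_castSucc_lt]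
        · rw [Fin.lt_def]; simp only [Fin.val_castSucc]; omega
        · rw [Fin.lt_def]; simp only [Fin.val_castSucc]; omega
    · rw [Fin.cons_succ]
      by_cases hi : (i:ℕ) < r
      · rw [snoc_lt y i hi, h3]
        nth_rewrite 1 [h4]
        apply h1
        rw [Fin.succAbove_of_le_castSucc]
        · rw [Fin.le_def]; simp
        · rw [Fin.le_def]; simp
      · rw [snoc_ge y i hi, h4]; exact (h2 i).2
  · rintro ⟨⟨h1, h2⟩, h3, h4⟩
    rw [Fin.cons_succ] at h4
    have h5 : 0 ≤ t := by
      refine le_trans ?_ h3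
      by_cases hi : (i:ℕ) = 0
      · have : i.castSucc = 0 := by ext; simpa using hi
        rw [this, Fin.cons_zero]
      · have : i.castSucc = (⟨i - 1, by omega⟩ : Fin r).castSucc.succ := by ext; simp; omega
        rw [this, Fin.cons_succ, Fin.snoc_castSucc]
        exact (h2 _).1
    have h6 : t ≤ 1 := h4.trans (snoc_mem y h2 i).2
    have hl : ∀ j : Fin r, (j:ℕ) < i → y j ≤ t := by
      intro j hj
      refine le_trans ?_ h3
      have : i.castSucc = (⟨i - 1, by omega⟩ : Fin r).castSucc.succ := by ext; simp; omega
      rw [this, Fin.cons_succ, Fin.snoc_castSucc]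
      apply h1
      rw [Fin.le_def]; simp; omega
    have hr : ∀ j : Fin r, (i:ℕ) ≤ j → t ≤ y j := by
      intro j hj
      refine h4.trans ?_
      rw [snoc_lt y i (by omega)]
      apply h1
      rw [Fin.le_def]; exact hj
    refine ⟨?_, ?_⟩
    · intro a b hab
      rcases Fin.eq_self_or_eq_succAbove i a with rfl | ⟨a, rfl⟩
      · rcases Fin.eq_self_or_eq_succAbove a b with rfl | ⟨b, rfl⟩
        · exact le_rfl
        · simp only [Fin.insertNth_apply_same, Fin.insertNth_apply_succAbove]
          apply hr
          by_contra hh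
          rw [Fin.succAbove_of_castSucc_lt _ _ (by rw [Fin.lt_def]; simpa using hh), Fin.le_def] at hab
          simp at hab; omega
      · rcases Fin.eq_self_or_eq_succAbove i b with rfl | ⟨b, rfl⟩
        · simp only [Fin.insertNth_apply_same, Fin.insertNth_apply_succAbove]
          apply hl
          by_contra hh
          rw [Fin.succAbove_of_le_castSucc _ _ (by rw [Fin.le_def]; simpa using hh), Fin.le_def] at hab
          simp at hab; omega
        · simp only [Fin.insertNth_apply_succAbove]
          exact h1 ((Fin.strictMono_succAbove i).le_iff_le.1 hab)
    · intro u
      rcases Fin.eq_self_or_eq_succAbove i u with rfl | ⟨u, rfl⟩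
      · simp only [Fin.insertNth_apply_same]; exact ⟨h5, h6⟩
      · simp only [Fin.insertNth_apply_succAbove]; exact h2 u

lemma cont_slice {r : ℕ} (i : Fin (r+1)) (f' : ℝ → (Fin r → ℝ) → ℝ) (hf' : Continuous (fun q : ℝ × (Fin r → ℝ) => f' q.1 q.2)) :
    Continuous (fun x : Fin (r+1) → ℝ => f' (x i) (fun j => x (i.succAbove j))) := by
  have : Continuous (fun x : Fin (r+1) → ℝ => (x i, fun j => x (i.succAbove j))) := by fun_prop
  exact hf'.comp this

lemma div_zero_Om {r : ℕ} (i : Fin (r+1)) (f f' : ℝ → (Fin r → ℝ) → ℝ) (hf' : Continuous (fun q : ℝ × (Fin r → ℝ) => f' q.1 q.2))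
    (hd : ∀ y t, HasDerivAt (fun t => f t y) (f' t y) t) (h0 : ∀ y, f 0 y = 0) (h1 : ∀ y, f 1 y = 0)
    (h2 : ∀ y j, f (y j) y = 0) :
    ∫ x in Om (r+1), f' (x i) (fun j => x (i.succAbove j)) = 0 := by
  have hOm := (Om_closed (r+1)).measurableSet
  have hmp := (volume_preserving_piFinSuccAbove (fun _ : Fin (r+1) => ℝ) i).symm
  have hcont : Continuous (fun x : Fin (r+1) → ℝ => f' (x i) (fun j => x (i.succAbove j))) := by
    have : Continuous (fun x : Fin (r+1) → ℝ => (x i, fun j => x (i.succAbove j))) := by fun_prop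
    exact hf'.comp this
  have hIgr : IntegrableOn (fun x : Fin (r+1) → ℝ => f' (x i) (fun j => x (i.succAbove j))) (Om (r+1)) :=
    hcont.continuousOn.integrableOn_compact (Om_compact _)
  rw [← integral_indicator hOm]
  have hint2 : Integrable ((Om (r+1)).indicator (fun x : Fin (r+1) → ℝ => f' (x i) (fun j => x (i.succAbove j)))) :=
    hIgr.integrable_indicator hOm
  rw [← hmp.integral_comp' ]
  rw [Measure.volume_eq_prod, integral_prod_symm]
  · apply integral_eq_zero_of_ae
    refine Filter.Eventually.of_forall fun y => ?_
    simp only [Pi.zero_apply]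
    have he : ∀ t : ℝ, (MeasurableEquiv.piFinSuccAbove (fun _ : Fin (r+1) => ℝ) i).symm (t, y) = i.insertNth t y := fun t => rfl
    simp_rw [he]
    set lo := (Fin.cons 0 (Fin.snoc y 1 : Fin (r+1) → ℝ) : Fin (r+2) → ℝ) i.castSucc with hlo
    set hi := (Fin.cons 0 (Fin.snoc y 1 : Fin (r+1) → ℝ) : Fin (r+2) → ℝ) i.succ with hhi
    by_cases hy : y ∈ Om r
    · have hz : Monotone (Fin.cons 0 (Fin.snoc y 1 : Fin (r+1) → ℝ) : Fin (r+2) → ℝ) :=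
        mono_cons _ (mono_snoc y hy.1 fun u => (hy.2 u).2) (snoc_mem y hy.2 0).1
      have hlh : lo ≤ hi := hz (Fin.castSucc_lt_succ).le
      have : ∀ t : ℝ, (Om (r+1)).indicator (fun x : Fin (r+1) → ℝ => f' (x i) (fun j => x (i.succAbove j))) (i.insertNth t y)
          = (Set.Icc lo hi).indicator (fun t => f' t y) t := by
        intro t
        by_cases ht : t ∈ Set.Icc lo hi
        · rw [Set.indicator_of_mem ht, Set.indicator_of_mem ((insertNth_mem_Om i t y).2 ⟨hy, ht⟩)]
          simp
        · rw [Set.indicator_of_notMem ht, Set.indicator_of_notMem (fun h => ht ((insertNth_mem_Om i t y).1 h).2)]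
      simp_rw [this]
      rw [integral_indicator measurableSet_Icc, integral_Icc_eq_integral_Ioc, ← intervalIntegral.integral_of_le hlh]
      rw [intervalIntegral.integral_eq_sub_of_hasDerivAt (fun t _ => hd y t)]
      · have e1 : f hi y = 0 := by
          rw [hhi, Fin.cons_succ]
          by_cases h : (i:ℕ) < r
          · rw [snoc_lt y i h]; exact h2 _ _
          · rw [snoc_ge y i h]; exact h1 _
        have e2 : f lo y = 0 := by
          rw [hlo]
          by_cases h : (i:ℕ) = 0
          · have : i.castSucc = 0 := by ext; simpa using h
            rw [this, Fin.cons_zero]; exact h0 _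
          · have : i.castSucc = (⟨i - 1, by omega⟩ : Fin r).castSucc.succ := by ext; simp; omega
            rw [this, Fin.cons_succ, Fin.snoc_castSucc]; exact h2 _ _
        rw [e1, e2, sub_zero]
      · apply Continuous.intervalIntegrable
        have : Continuous (fun t : ℝ => (t, y)) := by fun_prop
        exact hf'.comp this
    · have : ∀ t : ℝ, (Om (r+1)).indicator (fun x : Fin (r+1) → ℝ => f' (x i) (fun j => x (i.succAbove j))) (i.insertNth t y) = 0 := by
        intro t
        rw [Set.indicator_of_notMem (fun h => hy ((insertNth_mem_Om i t y).1 h).1)]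
      simp_rw [this]
      simp
  · exact (hmp.integrable_comp_emb (MeasurableEquiv.measurableEmbedding _)).2 hint2

lemma Qp_coeff_cont {ι : Type*} (s : Finset ι) (κ : ℕ) : Continuous (fun x : ι → ℝ => (Qp s x).coeff κ) := by
  induction s using Finset.induction_on generalizing κ with
  | empty => simp only [Qp, Finset.prod_empty]; exact continuous_const
  | insert i s hi ih =>
    have : ∀ x : ι → ℝ, Qp (insert i s) x = Qp s x + Polynomial.C (x i) * (Polynomial.X * Qp s x) := by
      intro x; unfold Qp; rw [Finset.prod_insert hi]; ring
    simp_rw [this, Polynomial.coeff_add, Polynomial.coeff_C_mul]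
    cases κ with
    | zero => simp only [Polynomial.coeff_X_mul_zero, mul_zero, add_zero]; exact ih 0
    | succ κ =>
      simp only [Polynomial.coeff_X_mul]
      have h1 := ih (κ+1)
      have h2 := ih κ
      fun_prop

lemma Vd_insertNth {r : ℕ} (i : Fin (r+1)) : ∃ ε : ℝ, ∀ (t : ℝ) (y : Fin r → ℝ),
    Vd (i.insertNth t y : Fin (r+1) → ℝ) = ε * ((∏ j, (t - y j)) * Vd y) := by
  refine ⟨(Equiv.Perm.sign i.cycleRange : ℤ) * (-1)^r, fun t y => ?_⟩
  have h1 : Vd (Fin.cons t y : Fin (r+1) → ℝ) = (-1)^r * ((∏ j, (t - y j)) * Vd y) := by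
    unfold Vd
    rw [Matrix.det_vandermonde, Matrix.det_vandermonde, Fin.prod_univ_succ]
    have : ∏ j ∈ Finset.Ioi (0 : Fin (r+1)), ((Fin.cons t y : Fin (r+1) → ℝ) j - (Fin.cons t y : Fin (r+1) → ℝ) 0) = (-1)^r * ∏ j, (t - y j) := by
      rw [Fin.prod_Ioi_zero]
      simp only [Fin.cons_succ, Fin.cons_zero]
      have : ∀ j, y j - t = (-1) * (t - y j) := fun j => by ring
      simp_rw [this]
      rw [Finset.prod_mul_distrib]; simp
    rw [this, mul_assoc]
    congr 2
    refine Finset.prod_congr rfl fun a _ => ?_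
    rw [Fin.prod_Ioi_succ]
    simp
  have h2 : (i.insertNth t y : Fin (r+1) → ℝ) = (Fin.cons t y : Fin (r+1) → ℝ) ∘ i.cycleRange := by
    rw [← Fin.insertNth_comp_cycleRange_symm i t y]
    ext u; simp
  have h3 := Matrix.det_permute i.cycleRange (Matrix.vandermonde (Fin.cons t y : Fin (r+1) → ℝ))
  rw [mul_assoc, ← h1, h2]
  unfold Vd
  rw [← h3]
  rfl

def fA (r a b κ : ℕ) (y : Fin r → ℝ) : ℝ := (Qp Finset.univ y).coeff κ * wt r a b y

def fB (r a b κ : ℕ) (t : ℝ) (y : Fin r → ℝ) : ℝ :=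
  fA r a b κ y * (t^(a+1) * (1-t)^(b+1) * ∏ j, (t - y j))

def fB' (r a b κ : ℕ) (t : ℝ) (y : Fin r → ℝ) : ℝ :=
  fA r a b κ y * ((((a:ℝ)+1) * t^a * (1-t)^(b+1) - ((b:ℝ)+1) * t^(a+1) * (1-t)^b) * ∏ j, (t - y j) +
    t^(a+1) * (1-t)^(b+1) * ∑ j, ∏ l ∈ Finset.univ.erase j, (t - y l))

lemma fB_deriv (r a b κ : ℕ) (y : Fin r → ℝ) (t : ℝ) :
    HasDerivAt (fun t => fB r a b κ t y) (fB' r a b κ t y) t := by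
  unfold fB fB'
  refine HasDerivAt.const_mul _ ?_
  have h1 : HasDerivAt (fun t : ℝ => t^(a+1)) (((a:ℝ)+1) * t^a) t := by
    refine (hasDerivAt_pow (a+1) t).congr_deriv ?_
    push_cast; simp
  have h2 : HasDerivAt (fun t : ℝ => (1-t)^(b+1)) (-(((b:ℝ)+1) * (1-t)^b)) t := by
    refine (((hasDerivAt_id t).const_sub 1).fun_pow (b+1)).congr_deriv ?_
    push_cast; simp
  have h3 : HasDerivAt (fun t : ℝ => ∏ j, (t - y j)) (∑ j, ∏ l ∈ Finset.univ.erase j, (t - y l)) t := by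
    have := HasDerivAt.fun_finsetProd (u := Finset.univ) (f := fun (j : Fin r) (t : ℝ) => t - y j) (f' := fun _ => 1) (x := t)
      (fun j _ => (hasDerivAt_id t).sub_const (y j))
    refine this.congr_deriv ?_
    simp
  refine ((h1.fun_mul h2).fun_mul h3).congr_deriv ?_
  ring

lemma fA_cont (r a b κ : ℕ) : Continuous (fA r a b κ) := by
  unfold fA
  exact (Qp_coeff_cont _ κ).mul (wt_cont r a b)

lemma fB'_cont (r a b κ : ℕ) : Continuous (fun q : ℝ × (Fin r → ℝ) => fB' r a b κ q.1 q.2) := by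
  unfold fB'
  have := fA_cont r a b κ
  fun_prop

lemma Qp_succAbove {r : ℕ} (i : Fin (r+1)) (x : Fin (r+1) → ℝ) :
    Qp Finset.univ (fun j => x (i.succAbove j)) = Qp (Finset.univ.erase i) x := by
  unfold Qp
  have : Finset.univ.erase i = Finset.univ.map i.succAboveEmb := by
    ext j; simp [eq_comm]
    constructor
    · intro h; obtain ⟨k, hk⟩ := Fin.exists_succAbove_eq (Ne.symm h); exact ⟨k, hk.symm⟩
    · rintro ⟨k, rfl⟩ h; exact Fin.succAbove_ne i k h.symm
  rw [this, Finset.prod_map]; rfl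

lemma sum_succAbove {r : ℕ} (i : Fin (r+1)) (f : Fin (r+1) → ℝ) :
    ∑ j, f (i.succAbove j) = ∑ j ∈ Finset.univ.erase i, f j := by
  have : Finset.univ.erase i = Finset.univ.map i.succAboveEmb := by
    ext j; simp [eq_comm]
    constructor
    · intro h; obtain ⟨k, hk⟩ := Fin.exists_succAbove_eq (Ne.symm h); exact ⟨k, hk.symm⟩
    · rintro ⟨k, rfl⟩ h; exact Fin.succAbove_ne i k h.symm
  rw [this, Finset.sum_map]; rfl

lemma fB'_eq (r a b κ : ℕ) (i : Fin (r+1)) : ∃ ε : ℝ, ∀ x : Fin (r+1) → ℝ, Function.Injective x →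
    ε * fB' r a b κ (x i) (fun j => x (i.succAbove j)) =
      wt (r+1) a b x * (((((a:ℝ)+1) - ((a:ℝ)+b+2) * x i + ∑ j ∈ Finset.univ.erase i, x i * (1 - x i) / (x i - x j)))
        * (Qp (Finset.univ.erase i) x).coeff κ) := by
  obtain ⟨ε, hε⟩ := Vd_insertNth i
  refine ⟨ε, fun x hx => ?_⟩
  have hV := hε (x i) (fun j => x (i.succAbove j))
  have hins : (i.insertNth (x i) (fun j => x (i.succAbove j)) : Fin (r+1) → ℝ) = x := Fin.insertNth_self_removeNth i x
  rw [hins] at hV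
  rw [← Qp_succAbove i x, ← sum_succAbove i (fun j => x i * (1 - x i) / (x i - x j))]
  unfold fB' fA wt
  rw [hV, Fin.prod_univ_succAbove _ i]
  have hs : ∑ j, ∏ l ∈ Finset.univ.erase j, (x i - x (i.succAbove l)) =
      (∏ j, (x i - x (i.succAbove j))) * ∑ j, 1 / (x i - x (i.succAbove j)) := by
    rw [Finset.mul_sum]
    refine Finset.sum_congr rfl fun j _ => ?_
    have hne : x i - x (i.succAbove j) ≠ 0 := sub_ne_zero.2 fun h => (Fin.succAbove_ne i j) (hx h).symm
    rw [← Finset.mul_prod_erase Finset.univ _ (Finset.mem_univ j)]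
    field_simp
  have hs2 : ∑ j, x i * (1 - x i) / (x i - x (i.succAbove j)) = x i * (1 - x i) * ∑ j, 1 / (x i - x (i.succAbove j)) := by
    rw [Finset.mul_sum]
    refine Finset.sum_congr rfl fun j _ => ?_
    ring
  rw [hs, hs2]
  ring

def En (r a b κ : ℕ) : ℝ := ∫ x in Om r, fA r a b κ x

lemma aomoto_int (r a b κ : ℕ) :
    (2 * ((a:ℝ)+1) + (((r+1:ℕ):ℝ) - κ - 1)) * (((r+1:ℕ):ℝ) - κ) * En (r+1) a b κ =
    (2 * ((a:ℝ)+b+2) + (2 * ((r+1:ℕ):ℝ) - 2 - κ)) * (κ + 1) * En (r+1) a b (κ+1) := by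
  choose ε hε using fun i => fB'_eq r a b κ i
  have hcont : ∀ i : Fin (r+1), Continuous (fun x : Fin (r+1) → ℝ => fB' r a b κ (x i) (fun j => x (i.succAbove j))) := by
    intro i
    exact cont_slice i (fB' r a b κ) (fB'_cont r a b κ)
  have h0 : ∫ x in Om (r+1), ∑ i, 2 * (ε i * fB' r a b κ (x i) (fun j => x (i.succAbove j))) = 0 := by
    rw [integral_finsetSum]
    · refine Finset.sum_eq_zero fun i _ => ?_
      rw [integral_const_mul, integral_const_mul, div_zero_Om i (fB r a b κ) (fB' r a b κ) (fB'_cont r a b κ) (fB_deriv r a b κ), mul_zero, mul_zero]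
      · intro y; simp [fB]
      · intro y; simp [fB]
      · intro y j
        unfold fB
        rw [Finset.prod_eq_zero (Finset.mem_univ j) (sub_self _)]; ring
    · intro i _
      exact (((hcont i).continuousOn.integrableOn_compact (Om_compact _)).const_mul (ε i)).const_mul 2
  have hIgr : ∀ κ, IntegrableOn (fA (r+1) a b κ) (Om (r+1)) := fun κ =>
    (fA_cont _ _ _ κ).continuousOn.integrableOn_compact (Om_compact _)
  have h1 : ∫ x in Om (r+1), ∑ i, 2 * (ε i * fB' r a b κ (x i) (fun j => x (i.succAbove j))) =
      ∫ x in Om (r+1), ((2 * ((a:ℝ)+1) + (((r+1:ℕ):ℝ) - κ - 1)) * (((r+1:ℕ):ℝ) - κ) * fA (r+1) a b κ x -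
        (2 * ((a:ℝ)+b+2) + (2 * ((r+1:ℕ):ℝ) - 2 - κ)) * (κ + 1) * fA (r+1) a b (κ+1) x) := by
    apply setIntegral_congr_ae (Om_closed _).measurableSet
    have : ∀ᵐ x : Fin (r+1) → ℝ, Function.Injective x := null_noninj
    filter_upwards [this] with x hx _
    simp_rw [hε _ x hx]
    have := aomoto_coeff Finset.univ x hx ((a:ℝ)+1) ((a:ℝ)+b+2) κ
    rw [Finset.card_univ, Fintype.card_fin] at this
    rw [← Finset.mul_sum, ← Finset.mul_sum, mul_left_comm]
    refine Eq.trans (congrArg (fun t => wt (r+1) a b x * t) (Eq.trans ?_ this)) ?_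
    · congr!
    unfold fA
    ring
  rw [h0, integral_sub ((hIgr κ).const_mul _) ((hIgr (κ+1)).const_mul _), integral_const_mul, integral_const_mul] at h1
  unfold En
  linarith

lemma En_zero (r a b : ℕ) : En r a b 0 = Sel r a b := by
  unfold En Sel fA
  have : ∀ x : Fin r → ℝ, (Qp Finset.univ x).coeff 0 = 1 := by
    intro x; unfold Qp
    rw [Polynomial.coeff_zero_prod]; simp
  simp [this]

lemma Qp_top {ι : Type*} (s : Finset ι) (x : ι → ℝ) : (Qp s x).natDegree ≤ s.card ∧ (Qp s x).coeff s.card = ∏ j ∈ s, x j := by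
  induction s using Finset.induction_on with
  | empty => simp [Qp]
  | insert i s hi ih =>
    have h : Qp (insert i s) x = (1 + Polynomial.C (x i) * Polynomial.X) * Qp s x := by
      unfold Qp; rw [Finset.prod_insert hi]
    have h' : Qp (insert i s) x = Qp s x + Polynomial.C (x i) * (Polynomial.X * Qp s x) := by
      rw [h]; ring
    rw [Finset.card_insert_of_notMem hi]
    constructor
    · rw [h]
      refine Polynomial.natDegree_mul_le.trans ?_
      have : (1 + Polynomial.C (x i) * Polynomial.X : Polynomial ℝ).natDegree ≤ 1 := by
        compute_degree
      omega
    · rw [h', Polynomial.coeff_add, Polynomial.coeff_C_mul, Polynomial.coeff_X_mul, ih.2, Finset.prod_insert hi,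
        Polynomial.coeff_eq_zero_of_natDegree_lt (by omega), zero_add]

lemma En_top (r a b : ℕ) : En r a b r = Sel r (a+1) b := by
  unfold En Sel fA wt
  have : ∀ x : Fin r → ℝ, (Qp Finset.univ x).coeff r = ∏ j, x j := by
    intro x
    have := (Qp_top Finset.univ x).2
    rwa [Finset.card_univ, Fintype.card_fin] at this
  simp_rw [this]
  congr 1
  ext x
  have : ∏ u, (x u ^ (a+1) * (1 - x u)^b) = (∏ u, x u) * ∏ u, (x u ^ a * (1 - x u)^b) := by
    rw [← Finset.prod_mul_distrib]
    exact Finset.prod_congr rfl fun u _ => by ring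
  rw [this]; ring

lemma Sel_rec (r a b : ℕ) :
    Sel r (a+1) b * ∏ κ ∈ range r, (2 * (a:ℝ) + 2 * b + 2 * r + 2 - κ) =
    Sel r a b * ∏ κ ∈ range r, (2 * (a:ℝ) + 1 + r - κ) := by
  cases r with
  | zero => simp [Sel_zero]
  | succ r =>
    have h : ∀ k ≤ r + 1, En (r+1) a b k * ((k.factorial : ℝ) * ∏ κ ∈ range k, (2 * (a:ℝ) + 2 * b + 2 * ((r+1:ℕ):ℝ) + 2 - κ)) =
        En (r+1) a b 0 * ∏ κ ∈ range k, ((((r+1:ℕ):ℝ) - κ) * (2 * (a:ℝ) + 1 + ((r+1:ℕ):ℝ) - κ)) := by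
      intro k
      induction k with
      | zero => simp
      | succ k ih =>
        intro hk
        have h1 := ih (by omega)
        have h2 := aomoto_int r a b k
        rw [Finset.prod_range_succ, Finset.prod_range_succ, Nat.factorial_succ, ← mul_assoc (En (r+1) a b 0), ← h1]
        push_cast at h2 ⊢
        linear_combination (-(k.factorial : ℝ) * ∏ κ ∈ range k, (2 * (a:ℝ) + 2 * b + 2 * (r+1) + 2 - κ)) * h2
    have h1 := h (r+1) le_rfl
    rw [En_top, En_zero, Finset.prod_mul_distrib] at h1
    have h3 : ∀ k : ℕ, ∏ κ ∈ range k, (((k:ℕ):ℝ) - κ) = (k.factorial : ℝ) := by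
      intro k
      rw [← Finset.prod_range_reflect, ← Finset.prod_range_add_one_eq_factorial]
      push_cast
      refine Finset.prod_congr rfl fun j hj => ?_
      have := Finset.mem_range.1 hj
      rw [Nat.sub_sub, Nat.cast_sub (by omega)]; push_cast; ring
    rw [h3] at h1
    have h4 : ((r+1).factorial : ℝ) ≠ 0 := by positivity
    apply mul_left_cancel₀ h4
    linear_combination h1

lemma Sel_pos (r a b : ℕ) : 0 < Sel r a b := by
  unfold Sel
  rw [setIntegral_pos_iff_support_of_nonneg_ae]
  · have hop : IsOpen {x : Fin r → ℝ | (∀ i j, i < j → x i < x j) ∧ ∀ i, 0 < x i ∧ x i < 1} := by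
      refine IsOpen.and ?_ ?_
      · simp only [Set.ofPred_forall]
        refine isOpen_iInter_of_finite fun i => isOpen_iInter_of_finite fun j => isOpen_iInter_of_finite fun _ => ?_
        exact isOpen_lt (continuous_apply i) (continuous_apply j)
      · simp only [Set.ofPred_forall]
        refine isOpen_iInter_of_finite fun i => ?_
        exact (isOpen_lt continuous_const (continuous_apply i)).and (isOpen_lt (continuous_apply i) continuous_const)
    refine lt_of_lt_of_le (hop.measure_pos volume ?_) (measure_mono ?_)
    · refine ⟨fun i => ((i:ℝ)+1)/((r:ℝ)+1), ?_, ?_⟩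
      · intro i j hij
        have : (i:ℝ) < (j:ℝ) := by exact_mod_cast hij
        dsimp only
        gcongr
      · intro i
        have : (i:ℝ) < (r:ℝ) := by exact_mod_cast i.2
        constructor
        · positivity
        · rw [div_lt_one (by positivity)]; linarith
    · rintro x ⟨h1, h2⟩
      constructor
      · rw [Function.mem_support]
        unfold wt Vd
        apply ne_of_gt
        rw [Matrix.det_vandermonde]
        refine mul_pos (Finset.prod_pos fun i _ => Finset.prod_pos fun j hj => ?_) (Finset.prod_pos fun i _ => ?_)
        · have := h1 i j (by simpa using hj)
          linarith
        · exact mul_pos (pow_pos (h2 i).1 _) (pow_pos (by linarith [(h2 i).2]) _)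
      · refine ⟨fun i j hij => ?_, fun u => ⟨(h2 u).1.le, (h2 u).2.le⟩⟩
        rcases hij.lt_or_eq with h | h
        · exact (h1 i j h).le
        · rw [h]
  · exact (ae_restrict_iff' (Om_closed r).measurableSet).2 (Filter.Eventually.of_forall fun x hx => wt_nonneg a b hx)
  · exact (wt_cont r a b).continuousOn.integrableOn_compact (Om_compact _)

lemma prod_Ioo_fact (a c d : ℕ) : (∏ l ∈ Finset.Ioo a (a + 1 + d), ((l + c : ℕ) : ℚ)) * ((a + c).factorial : ℚ) =
    ((a + d + c).factorial : ℚ) := by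
  induction d with
  | zero =>
    have : Finset.Ioo a (a + 1 + 0) = ∅ := by
      ext l; simp only [Finset.mem_Ioo, Finset.notMem_empty, iff_false]; omega
    rw [this]; simp
  | succ d ih =>
    have : Finset.Ioo a (a + 1 + (d+1)) = insert (a+1+d) (Finset.Ioo a (a+1+d)) := by
      ext l; simp only [Finset.mem_Ioo, Finset.mem_insert]; omega
    rw [this, Finset.prod_insert (by simp), mul_assoc, ih]
    rw [show a + (d+1) + c = (a + d + c) + 1 by ring, Nat.factorial_succ]
    push_cast; ring

lemma E1even_pos (r p s : ℕ) : 0 < E1even r p s := by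
  unfold E1even
  refine mul_pos (inv_pos.2 (Finset.prod_pos fun l hl => ?_)) (inv_pos.2 (Finset.prod_pos fun l hl => ?_))
  · rw [Finset.mem_Ioo] at hl
    have : 0 < l + 2 * s := by omega
    positivity
  · rw [Finset.mem_Icc] at hl
    have : 0 < (l + 2 * s) * (2 * p - l + 2 + 2 * s) := Nat.mul_pos (by omega) (by omega)
    exact pow_pos (by exact_mod_cast this) _

lemma E1_pos (r p s : ℕ) : 0 < E1 r p s := by
  unfold E1
  split_ifs
  · exact E1even_pos _ _ _
  · have := E1even_pos (r-1) p s
    positivity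

lemma prod_Icc_two (q : ℕ) (f : ℕ → ℚ) (h1 : f 1 = 1) :
    ∏ l ∈ Finset.Icc 2 (2 * q + 2), f l = (∏ l ∈ Finset.Icc 2 (2 * q), f l) * f (2 * q + 1) * f (2 * q + 2) := by
  cases q with
  | zero => simp [h1]
  | succ q =>
    rw [Finset.prod_Icc_succ_top (by omega), Finset.prod_Icc_succ_top (by omega)]

lemma E1even_step (q m s : ℕ) (h : 2 * q + 2 ≤ m) :
    E1even (2 * q + 2) m s * ((2 * m - 2 * q + 2 * s).factorial : ℚ) =
      E1even (2 * q) m s * ((2 * q + 1 + 2 * s).factorial : ℚ) := by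
  obtain ⟨d, rfl⟩ : ∃ d, m = 2 * q + 2 + d := ⟨m - (2*q+2), by omega⟩
  have hP := prod_Ioo_fact (2 * q + 2) (2 * s) (2 * d + 1)
  unfold E1even
  rw [prod_Icc_two q _ (by simp)]
  have e1 : Finset.Ioo (2 * q) (2 * (2 * q + 2 + d) - 2 * q + 2) =
      insert (2 * q + 1) (insert (2 * q + 2) (insert (2 * q + 4 + 2 * d) (insert (2 * q + 5 + 2 * d)
        (Finset.Ioo (2 * q + 2) (2 * q + 2 + 1 + (2 * d + 1)))))) := by
    ext l; simp only [Finset.mem_Ioo, Finset.mem_insert]; omega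
  have e2 : 2 * (2 * q + 2 + d) - (2 * q + 2) + 2 = 2 * q + 2 + 1 + (2 * d + 1) := by omega
  rw [e1, e2, Finset.prod_insert (by simp; omega), Finset.prod_insert (by simp; omega),
    Finset.prod_insert (by simp; omega), Finset.prod_insert (by simp; omega), Finset.prod_pow, Finset.prod_pow]
  have hP0 : (∏ l ∈ Finset.Ioo (2 * q + 2) (2 * q + 2 + 1 + (2 * d + 1)), ((l + 2 * s : ℕ) : ℚ)) ≠ 0 := by
    refine Finset.prod_ne_zero_iff.2 fun l hl => ?_
    rw [Finset.mem_Ioo] at hl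
    have : l + 2 * s ≠ 0 := by omega
    exact_mod_cast this
  have hQ0 : (∏ l ∈ Finset.Icc 2 (2 * q), (((l + 2 * s) * (2 * (2 * q + 2 + d) - l + 2 + 2 * s) : ℕ) : ℚ) ^ (l / 2)) ≠ 0 := by
    refine Finset.prod_ne_zero_iff.2 fun l hl => pow_ne_zero _ ?_
    rw [Finset.mem_Icc] at hl
    have : (l + 2 * s) * (2 * (2 * q + 2 + d) - l + 2 + 2 * s) ≠ 0 := Nat.mul_ne_zero (by omega) (by omega)
    exact_mod_cast this
  generalize (∏ l ∈ Finset.Icc 2 (2 * q), (((l + 2 * s) * (2 * (2 * q + 2 + d) - l + 2 + 2 * s) : ℕ) : ℚ) ^ (l / 2)) = Q at *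
  generalize (∏ l ∈ Finset.Ioo (2 * q + 2) (2 * q + 2 + 1 + (2 * d + 1)), ((l + 2 * s : ℕ) : ℚ)) = P at *
  rw [show 2 * (2 * q + 2 + d) - (2 * q + 1) + 2 + 2 * s = 2 * q + 5 + 2 * d + 2 * s by omega,
    show 2 * q + 2 + 1 + (2 * d + 1) + 2 * s = 2 * q + 4 + 2 * d + 2 * s by omega,
    show 2 * (2 * q + 2 + d) - 2 * q + 2 * s = (2 * q + 2 + (2 * d + 1) + 2 * s) + 1 by omega,
    show (2 * q + 1) / 2 = q by omega, show (2 * q + 2) / 2 = q + 1 by omega, show 2 * q / 2 = q by omega,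
    Nat.factorial_succ, Nat.cast_mul, Nat.cast_mul, Nat.cast_mul, ← hP, show 2 * q + 2 + 2 * s = (2 * q + 1 + 2 * s) + 1 by ring,
    Nat.factorial_succ, show 2 * q + 2 + (2 * d + 1) + 2 * s + 1 = 2 * q + 4 + 2 * d + 2 * s by ring]
  have x1 : ((2 * q + 1 + 2 * s : ℕ) : ℚ) ≠ 0 := by positivity
  have x2 : ((2 * q + 1 + 2 * s + 1 : ℕ) : ℚ) ≠ 0 := by positivity
  have x3 : ((2 * q + 4 + 2 * d + 2 * s : ℕ) : ℚ) ≠ 0 := by positivity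
  have x4 : ((2 * q + 5 + 2 * d + 2 * s : ℕ) : ℚ) ≠ 0 := by positivity
  rw [Nat.cast_mul]
  generalize ((2 * q + 1 + 2 * s : ℕ) : ℚ) = X1 at *
  generalize ((2 * q + 1 + 2 * s + 1 : ℕ) : ℚ) = X2 at *
  generalize ((2 * q + 4 + 2 * d + 2 * s : ℕ) : ℚ) = X3 at *
  generalize ((2 * q + 5 + 2 * d + 2 * s : ℕ) : ℚ) = X4 at *
  rw [mul_pow, mul_pow, pow_succ, pow_succ, pow_succ]
  field_simp

lemma E1even_ratio (q m s : ℕ) (h : 2 * q ≤ m) :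
    E1even (2 * q) m (s+1) * ∏ κ ∈ range (2 * q), ((2 * s + 2 * m + 2 - κ : ℕ) : ℚ) =
      E1even (2 * q) m s * ∏ κ ∈ range (2 * q), ((2 * s + 2 + κ : ℕ) : ℚ) := by
  induction q with
  | zero => simp [E1even]
  | succ q ih =>
    have ih := ih (by omega)
    have h1 := E1even_step q m s (by omega)
    have h2 := E1even_step q m (s+1) (by omega)
    rw [show 2 * m - 2 * q + 2 * (s+1) = (2 * m - 2 * q + 2 * s) + 1 + 1 by ring,
      show 2 * q + 1 + 2 * (s+1) = (2 * q + 1 + 2 * s) + 1 + 1 by ring,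
      Nat.factorial_succ, Nat.factorial_succ, Nat.factorial_succ, Nat.factorial_succ] at h2
    rw [show 2 * (q+1) = 2 * q + 1 + 1 by ring, prod_range_succ, prod_range_succ, prod_range_succ, prod_range_succ]
    rw [show 2 * s + 2 * m + 2 - 2 * q = (2 * m - 2 * q + 2 * s) + 1 + 1 by omega,
      show 2 * s + 2 * m + 2 - (2 * q + 1) = (2 * m - 2 * q + 2 * s) + 1 by omega,
      show 2 * s + 2 + 2 * q = 2 * q + 1 + 2 * s + 1 by ring,
      show 2 * s + 2 + (2 * q + 1) = 2 * q + 1 + 2 * s + 1 + 1 by ring]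
    have f1 : ((2 * m - 2 * q + 2 * s).factorial : ℚ) ≠ 0 := by positivity
    rw [← mul_left_inj' f1]
    generalize (∏ κ ∈ range (2 * q), ((2 * s + 2 * m + 2 - κ : ℕ) : ℚ)) = P1 at *
    generalize (∏ κ ∈ range (2 * q), ((2 * s + 2 + κ : ℕ) : ℚ)) = P2 at *
    push_cast at h1 h2 ⊢
    linear_combination P1 * h2 +
      ((2 * q + 1 + 2 * s).factorial : ℚ) * (2 * q + 1 + 2 * s + 1) * (2 * q + 1 + 2 * s + 1 + 1) * ih -
      P2 * (2 * q + 1 + 2 * s + 1) * (2 * q + 1 + 2 * s + 1 + 1) * h1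

lemma E1_ratio (r m s : ℕ) (h : r ≤ m) :
    E1 r m (s+1) * ∏ κ ∈ range r, ((2 * s + 2 * m + 2 - κ : ℕ) : ℚ) =
      E1 r m s * ∏ κ ∈ range r, ((2 * s + 2 + κ : ℕ) : ℚ) := by
  rcases Nat.even_or_odd' r with ⟨q, rfl | rfl⟩
  · simpa [E1] using E1even_ratio q m s h
  · have h0 := E1even_ratio q m s (by omega)
    have e1 : (2 * q + 1) % 2 ≠ 0 := by omega
    simp only [E1, e1, if_false]
    rw [show 2 * q + 1 - 1 = 2 * q by omega, show 2 * q / 2 = q by omega, prod_range_succ, prod_range_succ,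
      show 2 * s + 2 * m + 2 - 2 * q = 2 * ((m - q + s) + 1) by omega,
      show q + (s+1) = (q + s) + 1 by ring, show m - q + (s+1) = (m - q + s) + 1 by ring,
      show 2 * s + 2 + 2 * q = 2 * (q + s + 1) by ring, Nat.factorial_succ, Nat.factorial_succ]
    have f1 : ((m - q + s).factorial : ℚ) ≠ 0 := by positivity
    have f2 : ((m - q + s + 1 : ℕ) : ℚ) ≠ 0 := by positivity
    rw [Nat.cast_mul, Nat.cast_mul, Nat.cast_mul 2, Nat.cast_mul 2]
    field_simp
    linear_combination h0

lemma Sel_E1 (r m s : ℕ) (h : r ≤ m) :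
    Sel r s (m - r) * (E1 r m 0 : ℝ) = Sel r 0 (m - r) * (E1 r m s : ℝ) := by
  induction s with
  | zero => ring
  | succ s ih =>
    have h1 := Sel_rec r s (m - r)
    have h2 : ((E1 r m (s+1) * ∏ κ ∈ range r, ((2 * s + 2 * m + 2 - κ : ℕ) : ℚ) : ℚ) : ℝ) =
      ((E1 r m s * ∏ κ ∈ range r, ((2 * s + 2 + κ : ℕ) : ℚ) : ℚ) : ℝ) := by rw [E1_ratio r m s h]
    push_cast at h2
    have p1 : ∏ κ ∈ range r, (2 * (s:ℝ) + 2 * ((m - r : ℕ) : ℝ) + 2 * r + 2 - κ) = ∏ κ ∈ range r, ((2 * s + 2 * m + 2 - κ : ℕ) : ℝ) := by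
      apply Finset.prod_congr rfl
      intro κ hκ
      rw [Finset.mem_range] at hκ
      rw [Nat.cast_sub h, Nat.cast_sub (by omega)]
      push_cast; ring
    have p2 : ∏ κ ∈ range r, (2 * (s:ℝ) + 1 + r - κ) = ∏ κ ∈ range r, (2 * (s:ℝ) + 2 + κ) := by
      rw [← Finset.prod_range_reflect]
      apply Finset.prod_congr rfl
      intro κ hκ
      rw [Finset.mem_range] at hκ
      rw [show r - 1 - κ = r - (1 + κ) by omega, Nat.cast_sub (by omega)]
      push_cast; ring
    rw [p1, p2] at h1
    have hp : (∏ κ ∈ range r, ((2 * s + 2 * m + 2 - κ : ℕ) : ℝ)) ≠ 0 := by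
      refine Finset.prod_ne_zero_iff.2 fun κ hκ => ?_
      rw [Finset.mem_range] at hκ
      have : 2 * s + 2 * m + 2 - κ ≠ 0 := by omega
      exact_mod_cast this
    rw [← mul_left_inj' hp]
    linear_combination (E1 r m 0 : ℝ) * h1 + (∏ κ ∈ range r, (2 * (s:ℝ) + 2 + κ)) * ih - Sel r 0 (m - r) * h2

lemma cc_split (m r s : ℕ) : cc m r s = cc m r 0 * cc m 0 s := by
  unfold cc
  have : (∏ t ∈ range m, (1:ℝ) / (t.factorial : ℝ)) * ∏ b ∈ range m, (b.factorial : ℝ) = 1 := by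
    rw [← Finset.prod_mul_distrib]
    apply Finset.prod_eq_one
    intro t _
    have : (t.factorial : ℝ) ≠ 0 := by positivity
    field_simp
  rw [Nat.sub_zero, this, Finset.range_zero, Finset.prod_empty]
  ring

theorem stmt19 (n m k : ℕ) (hnm : n ≤ m) (hk : k < n) :
    (sytCard (((Finset.range m) ×ˢ (Finset.range n)).filter fun c =>
        c.2 < n - (k - c.1)) : ℚ) =
      ((m * n - (k + 1).choose 2).choose (m * (n - k - 1)) : ℚ) *
        (sytCard ((Finset.range m) ×ˢ (Finset.range (n - k - 1))) : ℚ) *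
        (sytCard (((Finset.range (k + 1)) ×ˢ (Finset.range m)).filter fun c =>
          c.1 ≤ c.2) : ℚ) *
        E1 (k + 1) m (n - k - 1) / E1 (k + 1) m 0 := by
  obtain ⟨s, rfl⟩ : ∃ s, n = (k + 1) + s := ⟨n - (k+1), by omega⟩
  rw [show k + 1 + s - k - 1 = s by omega]
  have d1 : (((Finset.range m) ×ˢ (Finset.range (k + 1 + s))).filter fun c => c.2 < k + 1 + s - (k - c.1)) =
      Dg m (k + 1 + s) 0 s := by
    ext ⟨i, j⟩
    rw [mem_Dg, Finset.mem_filter, Finset.mem_product, Finset.mem_range, Finset.mem_range]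
    dsimp only
    omega
  have d2 : (Finset.range m) ×ˢ (Finset.range s) = Dg m (0 + s) 0 s := by
    ext ⟨i, j⟩
    rw [mem_Dg, Finset.mem_product, Finset.mem_range, Finset.mem_range]
    dsimp only
    omega
  have d3 : sytCard (((Finset.range (k + 1)) ×ˢ (Finset.range m)).filter fun c => c.1 ≤ c.2) =
      sytCard (Dg m (k + 1 + 0) 0 0) := by
    apply syt_transpose
    intro i j
    rw [mem_Dg, Finset.mem_filter, Finset.mem_product, Finset.mem_range, Finset.mem_range]
    dsimp only
    omega
  have c1 := card_Dg m (k+1) s hnm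
  have c2 := card_Dg m 0 s (by omega)
  have c3 := card_Dg m (k+1) 0 (by omega)
  have h1 := syt_Sel m (k+1) s hnm
  have h2 := syt_Sel m 0 s (by omega)
  have h3 := syt_Sel m (k+1) 0 (by omega)
  have hS := Sel_E1 (k+1) m s (by omega)
  rw [d1, d2, d3]
  have hE := E1_pos (k+1) m 0
  rw [eq_div_iff hE.ne']
  have e2 : (Dg m (0 + s) 0 s).card = m * s := by simpa using c2
  have e1 : (Dg m (k + 1 + s) 0 s).card = (Dg m (k + 1 + 0) 0 0).card + m * s := by
    rw [Nat.mul_add] at c1 c3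
    omega
  have e0 : m * (k + 1 + s) - (k+1).choose 2 = (Dg m (k + 1 + 0) 0 0).card + m * s := by omega
  rw [e0]
  rw [e1] at h1
  rw [e2] at h2
  generalize (Dg m (k + 1 + 0) 0 0).card = N at *
  have hch : (((N + m * s).choose (m * s) : ℕ) : ℝ) * (N.factorial : ℝ) * ((m * s).factorial : ℝ) = ((N + m * s).factorial : ℝ) := by
    have := Nat.add_choose_mul_factorial_mul_factorial N (m * s)
    exact_mod_cast this
  have key : ((sytCard (Dg m (k + 1 + s) 0 s) : ℕ) : ℝ) * ((E1 (k+1) m 0 : ℚ) : ℝ) =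
      (((N + m * s).choose (m * s) : ℕ) : ℝ) * ((sytCard (Dg m (0 + s) 0 s) : ℕ) : ℝ) *
        ((sytCard (Dg m (k + 1 + 0) 0 0) : ℕ) : ℝ) * ((E1 (k+1) m s : ℚ) : ℝ) := by
    rw [h1, h2, h3, Sel_zero, cc_split, ← hch]
    linear_combination (((N + m * s).choose (m * s) : ℕ) : ℝ) * (N.factorial : ℝ) * ((m * s).factorial : ℝ) *
      cc m (k+1) 0 * cc m 0 s * hS
  exact_mod_cast key
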